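/- arXiv:2302.12384 — 2 statements merged into one kernel-verified Lean document; each statement's English description precedes it below -/
import Mathlib

section
/- (Coercivity of the linearized Bogomol'nyi operator L_Q) Let m ≥ 1 be an integer and let Z₁, Z₂ : (0,∞) → ℂ be smooth, compactly supported in (0,∞), and satisfy (ΛQ,Z₁)_r·(iQ,Z₂)_r − (iQ,Z₁)_r·(ΛQ,Z₂)_r ≠ 0. Then there exist constants 0 < c ≤ C < ∞ such that for every continuously differentiable f : (0,∞) → ℂ with ‖f‖_{Ḣ¹_m} < ∞ and (f,Z₁)_r = (f,Z₂)_r = 0, one has c·‖f‖_{Ḣ¹_m} ≤ ‖L_Q f‖_{L²} ≤ C·‖f‖_{Ḣ¹_m}. -/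
open MeasureTheory Set Filter

noncomputable section

/-- The Jackiw–Pi vortex `Q(r) = √8 (m+1) r^m / (1 + r^(2m+2))`. -/
def Q (m : ℕ) (r : ℝ) : ℝ :=
  Real.sqrt 8 * (m + 1) * r ^ m / (1 + r ^ (2 * m + 2))

/-- `A_θ[u](r) = -(1/2) ∫₀^r |u(r')|² r' dr'`. -/
def Atheta (u : ℝ → ℂ) (r : ℝ) : ℝ :=
  -(1 / 2) * ∫ s in (0:ℝ)..r, ‖u s‖ ^ 2 * s

/-- Bilinear version `A_θ[f,g](r) = -(1/2) ∫₀^r Re(conj f g) r' dr'`. -/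
def Atheta2 (f g : ℝ → ℂ) (r : ℝ) : ℝ :=
  -(1 / 2) * ∫ s in (0:ℝ)..r, ((starRingEnd ℂ) (f s) * g s).re * s

/-- `A_t[u](r) = -∫_r^∞ (m + A_θ[u](r')) |u(r')|² / r' dr'`. -/
def At (m : ℕ) (u : ℝ → ℂ) (r : ℝ) : ℝ :=
  -∫ s in Set.Ioi r, ((m : ℝ) + Atheta u s) * ‖u s‖ ^ 2 / s

/-- Squared (2D radial) `L²` norm: `‖u‖² = 2π ∫₀^∞ |u(r)|² r dr`. -/
def L2sq (u : ℝ → ℂ) : ℝ :=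
  2 * Real.pi * ∫ r in Set.Ioi (0:ℝ), ‖u r‖ ^ 2 * r

/-- Squared equivariant `Ḣ¹_m` norm. -/
def H1msq (m : ℕ) (u : ℝ → ℂ) : ℝ :=
  2 * Real.pi * ∫ r in Set.Ioi (0:ℝ), (‖deriv u r‖ ^ 2 + (m : ℝ) ^ 2 * ‖u r‖ ^ 2 / r ^ 2) * r

/-- The energy functional. -/
def Energy (m : ℕ) (u : ℝ → ℂ) : ℝ :=
  2 * Real.pi * ∫ r in Set.Ioi (0:ℝ),
    ((1 / 2) * ‖deriv u r‖ ^ 2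
      + (1 / 2) * (((m : ℝ) + Atheta u r) / r) ^ 2 * ‖u r‖ ^ 2
      - (1 / 4) * ‖u r‖ ^ 4) * r

/-- The Chern–Simons–Schrödinger equation at the point `(t, r)`:
`i ∂_t u - A_t[u] u + ∂_r² u + (1/r) ∂_r u - ((m + A_θ[u])/r)² u + |u|² u = 0`. -/
def CSSeq (m : ℕ) (u : ℝ → ℝ → ℂ) (t r : ℝ) : Prop :=
  Complex.I * deriv (fun s => u s r) t
    - (At m (u t) r : ℂ) * u t r
    + deriv (deriv (u t)) r
    + (1 / (r : ℂ)) * deriv (u t) r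
    - ((((m : ℝ) + Atheta (u t) r) / r : ℝ) : ℂ) ^ 2 * u t r
    + ((‖u t r‖ : ℝ) : ℂ) ^ 2 * u t r = 0

/-- A classical `m`-equivariant solution of CSS on the open interval `I`. -/
structure IsCSS (m : ℕ) (I : Set ℝ) (u : ℝ → ℝ → ℂ) : Prop where
  smooth : ContDiffOn ℝ (⊤ : ℕ∞) (fun p : ℝ × ℝ => u p.1 p.2) (I ×ˢ Set.Ioi (0:ℝ))
  integrable : ∀ t ∈ I, IntegrableOn (fun r => ‖u t r‖ ^ 2 * r) (Set.Ioi (0:ℝ))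
  equivariant : ∃ U : ℝ → ℝ × ℝ → ℂ,
    ContDiffOn ℝ (⊤ : ℕ∞) (fun p : ℝ × (ℝ × ℝ) => U p.1 p.2) (I ×ˢ (Set.univ : Set (ℝ × ℝ))) ∧
    ∀ t ∈ I, ∀ x : ℝ × ℝ, x ≠ 0 →
      U t x = u t (Real.sqrt (x.1 ^ 2 + x.2 ^ 2)) *
        (((x.1 : ℂ) + (x.2 : ℂ) * Complex.I) / ((Real.sqrt (x.1 ^ 2 + x.2 ^ 2) : ℝ) : ℂ)) ^ m
  bounded : ∀ J : Set ℝ, J ⊆ I → IsCompact J → ∃ C : ℝ, ∀ t ∈ J,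
    Real.sqrt (L2sq (u t)) + Real.sqrt (H1msq m (u t)) ≤ C
  eq : ∀ t ∈ I, ∀ r : ℝ, 0 < r → CSSeq m u t r

/-- Tightness: uniformly small mass near spatial infinity. -/
def Tight (I : Set ℝ) (u : ℝ → ℝ → ℂ) : Prop :=
  ∀ η : ℝ, 0 < η → ∃ R : ℝ, ∀ t ∈ I,
    2 * Real.pi * ∫ r in Set.Ioi R, ‖u t r‖ ^ 2 * r < η

/-- The real inner product `(f,g)_r = Re (2π ∫₀^∞ f conj(g) r dr)`. -/
def iprod (f g : ℝ → ℂ) : ℝ :=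
  2 * Real.pi * (∫ r in Set.Ioi (0:ℝ), f r * (starRingEnd ℂ) (g r) * (r : ℂ)).re

/-- `ΛQ = r Q' + Q`. -/
def LamQ (m : ℕ) (r : ℝ) : ℝ := r * deriv (Q m) r + Q m r

/-- The linearized Bogomol'nyi operator `L_Q`. -/
def LQ (m : ℕ) (f : ℝ → ℂ) (r : ℝ) : ℂ :=
  deriv f r - ((((m : ℝ) + Atheta (fun s => (Q m s : ℂ)) r) / r : ℝ) : ℂ) * f r
    - ((2 * Atheta2 (fun s => (Q m s : ℂ)) f r / r : ℝ) : ℂ) * (Q m r : ℂ)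

end

section Aux

open scoped Topology

/-- the explicit coefficient `m + A_θ[Q]` -/
noncomputable def aQ (m : ℕ) (r : ℝ) : ℝ := m - (2 * m + 2) * (r ^ (2 * m + 2) / (1 + r ^ (2 * m + 2)))

lemma xpos (m : ℕ) (r : ℝ) : 0 < 1 + r ^ (2 * m + 2) := by
  have : 0 ≤ r ^ (2 * m + 2) := Even.pow_nonneg ⟨m + 1, by ring⟩ r
  linarith

lemma Q_pos (m : ℕ) {r : ℝ} (hr : 0 < r) : 0 < Q m r := by
  unfold Q
  have := xpos m r
  positivity

lemma Q_cont (m : ℕ) : Continuous (Q m) := by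
  unfold Q
  exact Continuous.div (by fun_prop) (by fun_prop) (fun r => (xpos m r).ne')

lemma aQ_cont (m : ℕ) : Continuous (aQ m) := by
  unfold aQ
  refine continuous_const.sub (continuous_const.mul ?_)
  exact Continuous.div (by fun_prop) (by fun_prop) (fun r => (xpos m r).ne')

lemma Q_sq (m : ℕ) (r : ℝ) :
    Q m r ^ 2 = 8 * (m + 1) ^ 2 * r ^ (2 * m) / (1 + r ^ (2 * m + 2)) ^ 2 := by
  unfold Q
  rw [div_pow, mul_pow, mul_pow, Real.sq_sqrt (by norm_num)]
  congr 1
  ring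

lemma frac_deriv (m : ℕ) (r : ℝ) :
    HasDerivAt (fun r : ℝ => r ^ (2 * m + 2) / (1 + r ^ (2 * m + 2)))
      ((2 * m + 2) * r ^ (2 * m + 1) / (1 + r ^ (2 * m + 2)) ^ 2) r := by
  have h := hasDerivAt_pow (2 * m + 2) r
  have h2 := h.div (h.const_add 1) (xpos m r).ne'
  refine h2.congr_deriv ?_
  have : (2 * m + 2 - 1) = 2 * m + 1 := by omega
  rw [this]
  push_cast
  congr 1
  ring

lemma aQ_deriv (m : ℕ) (r : ℝ) :
    HasDerivAt (aQ m) (-(1 / 2) * Q m r ^ 2 * r) r := by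
  have := ((frac_deriv m r).const_mul (2 * (m:ℝ) + 2)).const_sub (m : ℝ)
  refine this.congr_deriv ?_
  rw [Q_sq]
  have := (xpos m r).ne'
  field_simp
  ring

lemma Atheta_eq (m : ℕ) (r : ℝ) :
    (m : ℝ) + Atheta (fun s => (Q m s : ℂ)) r = aQ m r := by
  unfold Atheta
  have h : ∫ s in (0:ℝ)..r, (-(1 / 2) * Q m s ^ 2 * s) = aQ m r - aQ m 0 := by
    apply intervalIntegral.integral_eq_sub_of_hasDerivAt
    · intro x _
      exact aQ_deriv m x
    · apply Continuous.intervalIntegrable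
      have := Q_cont m
      fun_prop
  have h0 : aQ m 0 = m := by simp [aQ]
  have h2 : -(1 / 2) * ∫ s in (0:ℝ)..r, ‖((Q m s : ℝ) : ℂ)‖ ^ 2 * s
      = ∫ s in (0:ℝ)..r, (-(1 / 2) * Q m s ^ 2 * s) := by
    rw [← intervalIntegral.integral_const_mul]
    congr 1
    ext s
    rw [Complex.norm_real, Real.norm_eq_abs, sq_abs]
    ring
  rw [h2, h, h0]
  ring

lemma Q_deriv (m : ℕ) (hm : 1 ≤ m) {r : ℝ} (hr : 0 < r) :
    HasDerivAt (Q m) (aQ m r * Q m r / r) r := by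
  have hx := (xpos m r).ne'
  have h1 := (hasDerivAt_pow m r).const_mul (Real.sqrt 8 * (m + 1))
  have h2 := h1.div ((hasDerivAt_pow (2 * m + 2) r).const_add 1) hx
  refine h2.congr_deriv ?_
  unfold aQ Q
  obtain ⟨k, rfl⟩ : ∃ k, m = k + 1 := ⟨m - 1, by omega⟩
  have e1 : k + 1 - 1 = k := by omega
  have e2 : 2 * (k + 1) + 2 - 1 = 2 * k + 3 := by omega
  rw [e1, e2]
  push_cast
  field_simp
  ring

lemma LamQ_eq (m : ℕ) (hm : 1 ≤ m) {r : ℝ} (hr : 0 < r) :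
    LamQ m r = (aQ m r + 1) * Q m r := by
  unfold LamQ
  rw [(Q_deriv m hm hr).deriv]
  field_simp

lemma frac_bounds (m : ℕ) (r : ℝ) :
    0 ≤ r ^ (2 * m + 2) / (1 + r ^ (2 * m + 2)) ∧ r ^ (2 * m + 2) / (1 + r ^ (2 * m + 2)) ≤ 1 := by
  have h : 0 ≤ r ^ (2 * m + 2) := Even.pow_nonneg ⟨m + 1, by ring⟩ r
  have := xpos m r
  constructor
  · positivity
  · rw [div_le_one this]; linarith

lemma aQ_sq_le (m : ℕ) (r : ℝ) : aQ m r ^ 2 ≤ (m + 2) ^ 2 := by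
  obtain ⟨h1, h2⟩ := frac_bounds m r
  unfold aQ
  set y := r ^ (2 * m + 2) / (1 + r ^ (2 * m + 2))
  have : (0:ℝ) ≤ m := Nat.cast_nonneg m
  apply sq_le_sq'
  · nlinarith
  · nlinarith

lemma aQ1_sq_le (m : ℕ) (r : ℝ) : (aQ m r + 1) ^ 2 ≤ (m + 1) ^ 2 := by
  obtain ⟨h1, h2⟩ := frac_bounds m r
  unfold aQ
  set y := r ^ (2 * m + 2) / (1 + r ^ (2 * m + 2))
  have : (0:ℝ) ≤ m := Nat.cast_nonneg m
  apply sq_le_sq'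
  · nlinarith
  · nlinarith

lemma aQ_one (m : ℕ) : aQ m 1 = -1 := by
  unfold aQ; norm_num; ring

lemma pow_le_aux (m k : ℕ) (hk : k ≤ 4 * m + 4) {r : ℝ} (hr : 0 ≤ r) :
    r ^ k ≤ (1 + r ^ (2 * m + 2)) ^ 2 := by
  have h0 : 0 ≤ r ^ (2 * m + 2) := by positivity
  rcases le_total r 1 with h | h
  · have := pow_le_one₀ hr h (n := k)
    nlinarith
  · have h1 := pow_le_pow_right₀ h hk
    have h2 : r ^ (4 * m + 4) = (r ^ (2 * m + 2)) ^ 2 := by ring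
    nlinarith

lemma int_aux (m k : ℕ) (hk : k + 2 ≤ 4 * m + 4) :
    IntegrableOn (fun r : ℝ => r ^ k / (1 + r ^ (2 * m + 2)) ^ 2) (Ioi 0) := by
  have h := (integrable_inv_one_add_sq.const_mul 2).integrableOn (s := Ioi (0:ℝ))
  refine Integrable.mono' h ?_ ?_
  · apply Continuous.aestronglyMeasurable
    exact Continuous.div (by fun_prop) (by fun_prop) (fun r => (pow_pos (xpos m r) 2).ne')
  · refine (ae_restrict_iff' measurableSet_Ioi).2 (ae_of_all _ fun r hr => ?_)
    have hr : 0 < r := hr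
    have hx := xpos m r
    rw [Real.norm_eq_abs, abs_of_nonneg (by positivity), ← div_eq_mul_inv, div_le_div_iff₀ (by positivity) (by positivity)]
    have h1 := pow_le_aux m k (by omega) hr.le
    have h2 := pow_le_aux m (k + 2) hk hr.le
    rw [pow_add] at h2
    linarith

lemma int_Qdiv (m : ℕ) (hm : 1 ≤ m) : IntegrableOn (fun r : ℝ => Q m r ^ 2 / r) (Ioi 0) := by
  have := (int_aux m (2 * m - 1) (by omega)).const_mul (8 * ((m:ℝ) + 1) ^ 2)
  refine IntegrableOn.congr_fun this ?_ measurableSet_Ioi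
  intro r hr
  have hr : 0 < r := hr
  have hx := xpos m r
  simp only [Q_sq]
  obtain ⟨k, rfl⟩ : ∃ k, m = k + 1 := ⟨m - 1, by omega⟩
  have e : 2 * (k + 1) - 1 = 2 * k + 1 := by omega
  rw [e]
  field_simp
  ring

lemma int_Qcube (m : ℕ) (hm : 1 ≤ m) : IntegrableOn (fun r : ℝ => Q m r ^ 2 * r ^ 3) (Ioi 0) := by
  have := (int_aux m (2 * m + 3) (by omega)).const_mul (8 * ((m:ℝ) + 1) ^ 2)
  refine IntegrableOn.congr_fun this ?_ measurableSet_Ioi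
  intro r hr
  have hr : 0 < r := hr
  have hx := xpos m r
  simp only [Q_sq]
  field_simp
  ring

lemma cs_aux {s : Set ℝ} {f g : ℝ → ℝ}
    (hf : IntegrableOn (fun r => f r ^ 2) s) (hg : IntegrableOn (fun r => g r ^ 2) s)
    (hfg : IntegrableOn (fun r => f r * g r) s) :
    (∫ r in s, f r * g r) ^ 2 ≤ (∫ r in s, f r ^ 2) * ∫ r in s, g r ^ 2 := by
  have key : ∀ t : ℝ, 0 ≤ (∫ r in s, g r ^ 2) * (t * t) + (2 * ∫ r in s, f r * g r) * t
      + ∫ r in s, f r ^ 2 := by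
    intro t
    have h : 0 ≤ ∫ r in s, (f r + t * g r) ^ 2 := integral_nonneg fun r => sq_nonneg _
    have e : ∫ r in s, (f r + t * g r) ^ 2
        = ∫ r in s, (f r ^ 2 + (2 * t) * (f r * g r) + (t * t) * g r ^ 2) := by
      congr 1; ext r; ring
    have hs : IntegrableOn (fun r => f r ^ 2 + (2 * t) * (f r * g r)) s :=
      Integrable.add hf (hfg.const_mul _)
    rw [e, integral_add hs (hg.const_mul _),
      integral_add hf (hfg.const_mul _), integral_const_mul, integral_const_mul] at h
    linarith
  have := discrim_le_zero key
  unfold discrim at this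
  linarith

lemma int_le_of_forall {φ : ℝ → ℝ} {B : ℝ} (hφ : IntegrableOn φ (Ioi 0))
    (h : ∀ ε R : ℝ, 0 < ε → ε ≤ 1 → 1 ≤ R → ∫ s in ε..R, φ s ≤ B) :
    ∫ s in Ioi 0, φ s ≤ B := by
  have hc : AECover (volume.restrict (Ioi (0:ℝ))) atTop
      (fun n : ℕ => Ioc (1 / ((n:ℝ) + 1)) ((n:ℝ) + 1)) := by
    have h1 : AECover (volume.restrict (Ioi (0:ℝ))) atTop (fun n : ℕ => Ioi (1 / ((n:ℝ) + 1))) :=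
      aecover_Ioi_of_Ioi tendsto_one_div_add_atTop_nhds_zero_nat
    have h2 : AECover (volume.restrict (Ioi (0:ℝ))) atTop (fun n : ℕ => Iic ((n:ℝ) + 1)) :=
      aecover_Iic (tendsto_atTop_add_const_right _ _ tendsto_natCast_atTop_atTop)
    exact h1.inter h2
  refine le_of_tendsto (hc.integral_tendsto_of_countably_generated hφ) (Eventually.of_forall ?_)
  intro n
  have hn : (0:ℝ) ≤ n := Nat.cast_nonneg n
  have hp : (0:ℝ) < 1 / ((n:ℝ) + 1) := by positivity
  have hl : 1 / ((n:ℝ) + 1) ≤ 1 := by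
    rw [div_le_one (by positivity)]; linarith
  have := h _ ((n:ℝ) + 1) hp hl (by linarith)
  rw [intervalIntegral.integral_of_le (by linarith)] at this
  rw [Measure.restrict_restrict measurableSet_Ioc, inter_eq_left.2]
  · exact this
  · intro x hx; exact hp.trans hx.1

noncomputable def GQ (m : ℕ) (f : ℝ → ℂ) (r : ℝ) : ℝ := ∫ s in (0:ℝ)..r, Q m s * (f s).re * s

lemma LQ_eq (m : ℕ) (f : ℝ → ℂ) (r : ℝ) :
    LQ m f r = deriv f r - ((aQ m r / r : ℝ) : ℂ) * f r + ((GQ m f r / r * Q m r : ℝ) : ℂ) := by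
  unfold LQ
  rw [Atheta_eq]
  have : Atheta2 (fun s => (Q m s : ℂ)) f r = -(1 / 2) * GQ m f r := by
    unfold Atheta2 GQ
    congr 2
    ext s
    simp
  rw [this]
  push_cast
  ring

lemma f_cont {f : ℝ → ℂ} (cd : ContDiffOn ℝ 1 f (Ioi 0)) : ContinuousOn f (Ioi 0) := cd.continuousOn

lemma f_deriv {f : ℝ → ℂ} (cd : ContDiffOn ℝ 1 f (Ioi 0)) {r : ℝ} (hr : 0 < r) :
    HasDerivAt f (deriv f r) r :=
  ((cd.differentiableOn (by norm_num)).differentiableAt (Ioi_mem_nhds hr)).hasDerivAt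

lemma f'_cont {f : ℝ → ℂ} (cd : ContDiffOn ℝ 1 f (Ioi 0)) : ContinuousOn (deriv f) (Ioi 0) :=
  cd.continuousOn_deriv_of_isOpen isOpen_Ioi (by norm_num)

lemma re_sq_le (z : ℂ) : z.re ^ 2 ≤ ‖z‖ ^ 2 := by
  rw [Complex.sq_norm, Complex.normSq_apply]; nlinarith [sq_nonneg z.im]

lemma Gint {m : ℕ} (hm : 1 ≤ m) {f : ℝ → ℂ} (cd : ContDiffOn ℝ 1 f (Ioi 0))
    (hi : IntegrableOn (fun r => ‖f r‖ ^ 2 / r) (Ioi 0)) :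
    IntegrableOn (fun s => Q m s * (f s).re * s) (Ioi 0) := by
  refine Integrable.mono' (hi.add (int_Qcube m hm)) ?_ ?_
  · apply ContinuousOn.aestronglyMeasurable _ measurableSet_Ioi
    have := (Q_cont m).continuousOn (s := Ioi (0:ℝ))
    have h2 := Complex.continuous_re.comp_continuousOn (f_cont cd)
    exact (this.mul h2).mul continuousOn_id
  · refine (ae_restrict_iff' measurableSet_Ioi).2 (ae_of_all _ fun r hr => ?_)
    have hr : 0 < r := hr
    have h1 := re_sq_le (f r)
    simp only [Pi.add_apply]
    rw [Real.norm_eq_abs]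
    have h3 : (f r).re ^ 2 / r ≤ ‖f r‖ ^ 2 / r := by gcongr
    refine le_trans ?_ (add_le_add_left h3 _)
    have e : (f r).re ^ 2 / r = ((f r).re / r) ^ 2 * r := by field_simp
    rw [e]
    have e2 : Q m r * (f r).re * r = ((f r).re / r) * (Q m r * r) * r := by field_simp
    rw [e2, abs_mul, abs_of_pos hr]
    have : |(f r).re / r * (Q m r * r)| ≤ ((f r).re / r) ^ 2 + (Q m r * r) ^ 2 := by
      rw [abs_le]
      constructor <;> nlinarith [sq_nonneg ((f r).re / r + Q m r * r), sq_nonneg ((f r).re / r - Q m r * r), sq_nonneg ((f r).re / r), sq_nonneg (Q m r * r)]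
    nlinarith

lemma G_sq_le {m : ℕ} (hm : 1 ≤ m) {f : ℝ → ℂ} (cd : ContDiffOn ℝ 1 f (Ioi 0))
    (hi : IntegrableOn (fun r => ‖f r‖ ^ 2 / r) (Ioi 0)) {r : ℝ} (hr : 0 < r) :
    GQ m f r ^ 2 ≤ (∫ s in Ioi 0, Q m s ^ 2 * s ^ 3) * ∫ s in Ioi 0, ‖f s‖ ^ 2 / s := by
  have hsub : Ioc 0 r ⊆ Ioi (0:ℝ) := fun x hx => hx.1
  have hre : IntegrableOn (fun r => (f r).re ^ 2 / r) (Ioi 0) := by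
    refine Integrable.mono' hi ?_ ?_
    · apply ContinuousOn.aestronglyMeasurable _ measurableSet_Ioi
      have h2 := Complex.continuous_re.comp_continuousOn (f_cont cd)
      exact (h2.pow 2).div continuousOn_id (fun x hx => (ne_of_gt hx))
    · refine (ae_restrict_iff' measurableSet_Ioi).2 (ae_of_all _ fun r hr => ?_)
      have hr : 0 < r := hr
      rw [Real.norm_eq_abs, abs_of_nonneg (by positivity)]
      have := re_sq_le (f r)
      gcongr
  have e1 : EqOn (fun s => (Q m s * s * √s) ^ 2) (fun s => Q m s ^ 2 * s ^ 3) (Ioi 0) := by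
    intro s hs
    have hs : 0 < s := hs
    simp only [mul_pow, Real.sq_sqrt hs.le]; ring
  have e2 : EqOn (fun s => ((f s).re / √s) ^ 2) (fun s => (f s).re ^ 2 / s) (Ioi 0) := by
    intro s hs
    have hs : 0 < s := hs
    simp only [div_pow, Real.sq_sqrt hs.le]
  have e3 : EqOn (fun s => (Q m s * s * √s) * ((f s).re / √s)) (fun s => Q m s * (f s).re * s) (Ioi 0) := by
    intro s hs
    have hs : 0 < s := hs
    have := Real.sqrt_pos.2 hs
    simp only; field_simp
  have h := cs_aux (s := Ioc 0 r) (f := fun s => Q m s * s * √s) (g := fun s => (f s).re / √s)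
    (((int_Qcube m hm).mono_set hsub).congr_fun (e1.symm.mono hsub) measurableSet_Ioc)
    ((hre.mono_set hsub).congr_fun (e2.symm.mono hsub) measurableSet_Ioc)
    (((Gint hm cd hi).mono_set hsub).congr_fun (e3.symm.mono hsub) measurableSet_Ioc)
  rw [setIntegral_congr_fun measurableSet_Ioc (e1.mono hsub),
    setIntegral_congr_fun measurableSet_Ioc (e2.mono hsub),
    setIntegral_congr_fun measurableSet_Ioc (e3.mono hsub)] at h
  unfold GQ
  rw [intervalIntegral.integral_of_le hr.le]
  refine h.trans ?_
  have hnn : ∀ (φ : ℝ → ℝ), (∀ s, 0 < s → 0 ≤ φ s) → 0 ≤ᵐ[volume.restrict (Ioi 0)] φ := fun φ hφ =>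
    (ae_restrict_iff' measurableSet_Ioi).2 (ae_of_all _ fun r hr => hφ r hr)
  have i1 : ∫ s in Ioc 0 r, Q m s ^ 2 * s ^ 3 ≤ ∫ s in Ioi 0, Q m s ^ 2 * s ^ 3 :=
    setIntegral_mono_set (int_Qcube m hm) (hnn _ fun s hs => by positivity)
      (LE.le.eventuallyLE hsub)
  have i2 : ∫ s in Ioc 0 r, (f s).re ^ 2 / s ≤ ∫ s in Ioi 0, (f s).re ^ 2 / s :=
    setIntegral_mono_set hre (hnn _ fun s hs => by positivity)
      (LE.le.eventuallyLE hsub)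
  have i3 : ∫ s in Ioi 0, (f s).re ^ 2 / s ≤ ∫ s in Ioi 0, ‖f s‖ ^ 2 / s :=
    setIntegral_mono_on hre hi measurableSet_Ioi fun s hs => by
      have hs : 0 < s := hs
      have := re_sq_le (f s)
      gcongr
  refine mul_le_mul i1 (i2.trans i3) ?_ ?_
  · exact setIntegral_nonneg measurableSet_Ioc fun s hs => by
      have : 0 < s := hs.1
      positivity
  · exact setIntegral_nonneg measurableSet_Ioi fun s hs => by
      have : 0 < s := hs
      positivity

lemma G_deriv {m : ℕ} (hm : 1 ≤ m) {f : ℝ → ℂ} (cd : ContDiffOn ℝ 1 f (Ioi 0))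
    (hi : IntegrableOn (fun r => ‖f r‖ ^ 2 / r) (Ioi 0)) {r : ℝ} (hr : 0 < r) :
    HasDerivAt (GQ m f) (Q m r * (f r).re * r) r := by
  have hco : ContinuousOn (fun s => Q m s * (f s).re * s) (Ioi 0) :=
    ((Q_cont m).continuousOn.mul (Complex.continuous_re.comp_continuousOn (f_cont cd))).mul
      continuousOn_id
  unfold GQ
  apply intervalIntegral.integral_hasDerivAt_right
  · rw [intervalIntegrable_iff_integrableOn_Ioc_of_le hr.le]
    exact (Gint hm cd hi).mono_set fun x hx => hx.1
  · exact hco.stronglyMeasurableAtFilter isOpen_Ioi r hr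
  · exact hco.continuousAt (Ioi_mem_nhds hr)

lemma G_lim {m : ℕ} (hm : 1 ≤ m) {f : ℝ → ℂ} (cd : ContDiffOn ℝ 1 f (Ioi 0))
    (hi : IntegrableOn (fun r => ‖f r‖ ^ 2 / r) (Ioi 0)) :
    Tendsto (GQ m f) (𝓝[>] 0) (𝓝 0) := by
  have h : IntegrableOn (fun s => Q m s * (f s).re * s) (uIcc 0 1) := by
    rw [uIcc_of_le zero_le_one, integrableOn_Icc_iff_integrableOn_Ioc]
    exact (Gint hm cd hi).mono_set fun x hx => hx.1
  have h2 := intervalIntegral.continuousOn_primitive_interval h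
  have h3 : ContinuousWithinAt (GQ m f) (uIcc 0 1) 0 := h2 0 (by simp)
  have h4 : GQ m f 0 = 0 := by simp [GQ]
  unfold ContinuousWithinAt at h3
  rw [h4, uIcc_of_le zero_le_one] at h3
  refine h3.mono_left ?_
  rw [nhdsWithin_le_iff]
  exact Icc_mem_nhdsGT zero_lt_one

lemma LQ_cont {m : ℕ} (hm : 1 ≤ m) {f : ℝ → ℂ} (cd : ContDiffOn ℝ 1 f (Ioi 0))
    (hi : IntegrableOn (fun r => ‖f r‖ ^ 2 / r) (Ioi 0)) :
    ContinuousOn (LQ m f) (Ioi 0) := by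
  have hG : ContinuousOn (GQ m f) (Ioi 0) := fun r hr =>
    (G_deriv hm cd hi hr).continuousAt.continuousWithinAt
  have hne : ∀ x ∈ Ioi (0:ℝ), x ≠ 0 := fun x hx => ne_of_gt hx
  have e : LQ m f = fun r => deriv f r - ((aQ m r / r : ℝ) : ℂ) * f r + ((GQ m f r / r * Q m r : ℝ) : ℂ) := by
    ext r; exact LQ_eq m f r
  rw [e]
  refine ((f'_cont cd).sub (ContinuousOn.mul ?_ (f_cont cd))).add ?_
  · exact Complex.continuous_ofReal.comp_continuousOn
      ((aQ_cont m).continuousOn.div continuousOn_id hne)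
  · exact Complex.continuous_ofReal.comp_continuousOn
      ((hG.div continuousOn_id hne).mul (Q_cont m).continuousOn)

noncomputable def PQ (m : ℕ) (f : ℝ → ℂ) (r : ℝ) : ℝ :=
  r ^ 2 * Q m r * (f r).re - 2 * (aQ m r + 1) * GQ m f r

structure Good (m : ℕ) (f : ℝ → ℂ) : Prop where
  cd : ContDiffOn ℝ 1 f (Ioi 0)
  hi : IntegrableOn (fun r => ‖f r‖ ^ 2 / r) (Ioi 0)
  lim : Tendsto (fun r => r ^ 2 * Q m r * (f r).re) (𝓝[>] 0) (𝓝 0)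
  hh : IntegrableOn (fun r => ‖LQ m f r‖ ^ 2 * r) (Ioi 0)

lemma P_deriv {m : ℕ} (hm : 1 ≤ m) {f : ℝ → ℂ} (hf : Good m f) {r : ℝ} (hr : 0 < r) :
    HasDerivAt (PQ m f) (r ^ 2 * Q m r * (LQ m f r).re) r := by
  have h1 : HasDerivAt (fun r => (f r).re) (deriv f r).re r :=
    Complex.reCLM.hasFDerivAt.comp_hasDerivAt r (f_deriv hf.cd hr)
  have h2 := (((hasDerivAt_pow 2 r).mul (Q_deriv m hm hr)).mul h1).sub
    ((((aQ_deriv m r).add_const 1).const_mul 2).mul (G_deriv hm hf.cd hf.hi hr))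
  refine h2.congr_deriv ?_
  rw [LQ_eq]
  simp only [Complex.add_re, Complex.sub_re, Complex.re_ofReal_mul, Complex.ofReal_re, Pi.mul_apply]
  push_cast
  field_simp
  ring

lemma P_sq_le {m : ℕ} (hm : 1 ≤ m) {f : ℝ → ℂ} (hf : Good m f) {r : ℝ} (hr : 0 < r) :
    PQ m f r ^ 2 ≤ (∫ s in Ioi 0, Q m s ^ 2 * s ^ 3) * ∫ s in Ioi 0, ‖LQ m f s‖ ^ 2 * s := by
  have hlc := LQ_cont hm hf.cd hf.hi
  have hrec : ContinuousOn (fun s => (LQ m f s).re) (Ioi 0) :=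
    Complex.continuous_re.comp_continuousOn hlc
  have key : ∀ ε, 0 < ε → ε < r → (PQ m f r - PQ m f ε) ^ 2 ≤
      (∫ s in Ioi 0, Q m s ^ 2 * s ^ 3) * ∫ s in Ioi 0, ‖LQ m f s‖ ^ 2 * s := by
    intro ε hε hεr
    have hsub : Ioc ε r ⊆ Ioi (0:ℝ) := fun x hx => hε.trans hx.1
    have hsub' : Icc ε r ⊆ Ioi (0:ℝ) := fun x hx => hε.trans_le hx.1
    have hQ := (Q_cont m).continuousOn (s := Icc ε r)
    have hR := hrec.mono hsub'
    have hcI : ∀ φ : ℝ → ℝ, ContinuousOn φ (Icc ε r) → IntegrableOn φ (Ioc ε r) := fun φ hφ =>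
      (hφ.integrableOn_compact isCompact_Icc).mono_set Ioc_subset_Icc_self
    have hP : ∫ s in ε..r, s ^ 2 * Q m s * (LQ m f s).re = PQ m f r - PQ m f ε := by
      apply intervalIntegral.integral_eq_sub_of_hasDerivAt
      · intro x hx
        rw [uIcc_of_le hεr.le] at hx
        exact P_deriv hm hf (hε.trans_le hx.1)
      · rw [intervalIntegrable_iff_integrableOn_Ioc_of_le hεr.le]
        apply hcI
        fun_prop
    rw [← hP, intervalIntegral.integral_of_le hεr.le]
    have e3 : EqOn (fun s => s ^ 2 * Q m s * (LQ m f s).re)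
        (fun s => (Q m s * s * √s) * ((LQ m f s).re * √s)) (Ioc ε r) := by
      intro s hs
      have hs : 0 < s := hsub hs
      have := Real.mul_self_sqrt hs.le
      simp only
      linear_combination (-(s * Q m s * (LQ m f s).re)) * this
    have e1 : EqOn (fun s => (Q m s * s * √s) ^ 2) (fun s => Q m s ^ 2 * s ^ 3) (Ioc ε r) := by
      intro s hs
      have hs : 0 < s := hsub hs
      simp only [mul_pow, Real.sq_sqrt hs.le]; ring
    have e2 : EqOn (fun s => ((LQ m f s).re * √s) ^ 2) (fun s => (LQ m f s).re ^ 2 * s) (Ioc ε r) := by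
      intro s hs
      have hs : 0 < s := hsub hs
      simp only [mul_pow, Real.sq_sqrt hs.le]
    rw [setIntegral_congr_fun measurableSet_Ioc e3]
    refine (cs_aux (hcI _ (by fun_prop)) (hcI _ (by fun_prop)) (hcI _ (by fun_prop))).trans ?_
    rw [setIntegral_congr_fun measurableSet_Ioc e1, setIntegral_congr_fun measurableSet_Ioc e2]
    have hnn : ∀ (φ : ℝ → ℝ), (∀ s, 0 < s → 0 ≤ φ s) → 0 ≤ᵐ[volume.restrict (Ioi 0)] φ := fun φ hφ =>
      (ae_restrict_iff' measurableSet_Ioi).2 (ae_of_all _ fun r hr => hφ r hr)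
    have i1 : ∫ s in Ioc ε r, Q m s ^ 2 * s ^ 3 ≤ ∫ s in Ioi 0, Q m s ^ 2 * s ^ 3 :=
      setIntegral_mono_set (int_Qcube m hm) (hnn _ fun s hs => by positivity)
        (LE.le.eventuallyLE hsub)
    have i2 : ∫ s in Ioc ε r, (LQ m f s).re ^ 2 * s ≤ ∫ s in Ioc ε r, ‖LQ m f s‖ ^ 2 * s :=
      setIntegral_mono_on (hcI _ (by fun_prop)) (hf.hh.mono_set hsub) measurableSet_Ioc fun s hs => by
        have hs : 0 < s := hsub hs
        have := re_sq_le (LQ m f s)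
        gcongr
    have i3 : ∫ s in Ioc ε r, ‖LQ m f s‖ ^ 2 * s ≤ ∫ s in Ioi 0, ‖LQ m f s‖ ^ 2 * s :=
      setIntegral_mono_set hf.hh (hnn _ fun s hs => by positivity)
        (LE.le.eventuallyLE hsub)
    refine mul_le_mul i1 (i2.trans i3) ?_ ?_
    · exact setIntegral_nonneg measurableSet_Ioc fun s hs => by
        have : 0 < s := hsub hs
        positivity
    · exact setIntegral_nonneg measurableSet_Ioi fun s hs => by
        have : 0 < s := hs
        positivity
  have hlim : Tendsto (PQ m f) (𝓝[>] 0) (𝓝 0) := by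
    have h1 : Tendsto (fun r => 2 * (aQ m r + 1)) (𝓝[>] 0) (𝓝 (2 * (aQ m 0 + 1))) := by
      apply Tendsto.mono_left _ nhdsWithin_le_nhds
      apply Continuous.tendsto
      have := aQ_cont m
      fun_prop
    have := hf.lim.sub (h1.mul (G_lim hm hf.cd hf.hi))
    have e : PQ m f = fun r => r ^ 2 * Q m r * (f r).re - 2 * (aQ m r + 1) * GQ m f r := rfl
    rw [e]
    simpa using this
  have hl2 : Tendsto (fun ε => (PQ m f r - PQ m f ε) ^ 2) (𝓝[>] 0) (𝓝 ((PQ m f r - 0) ^ 2)) :=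
    (tendsto_const_nhds.sub hlim).pow 2
  rw [sub_zero] at hl2
  refine le_of_tendsto hl2 ?_
  filter_upwards [Ioo_mem_nhdsGT hr] with ε hε using key ε hε.1 hε.2

lemma x_deriv (m : ℕ) {r : ℝ} (hr : 0 < r) :
    HasDerivAt (fun r : ℝ => r ^ (2 * m + 2)) ((2 * m + 2) * r ^ (2 * m + 2) / r) r := by
  refine (hasDerivAt_pow (2 * m + 2) r).congr_deriv ?_
  have : (2 * m + 2 - 1) = 2 * m + 1 := by omega
  rw [this]
  push_cast
  field_simp
  ring

lemma aQ_x (m : ℕ) {r : ℝ} (hr : 0 < r) :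
    (aQ m r + 1) * (1 + r ^ (2 * m + 2)) = (m + 1) * (1 - r ^ (2 * m + 2)) := by
  have := xpos m r
  unfold aQ
  field_simp
  ring

lemma mono_Ioi {g g' : ℝ → ℝ} (h : ∀ r, 0 < r → HasDerivAt g (g' r) r) (h' : ∀ r, 0 < r → 0 ≤ g' r) :
    MonotoneOn g (Ioi 0) := by
  apply monotoneOn_of_deriv_nonneg (convex_Ioi 0)
  · exact fun r hr => (h r hr).continuousAt.continuousWithinAt
  · rw [interior_Ioi]
    exact fun r hr => (h r hr).differentiableAt.differentiableWithinAt
  · rw [interior_Ioi]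
    intro r hr
    rw [(h r hr).deriv]
    exact h' r hr

lemma G_sup {m : ℕ} (hm : 1 ≤ m) {f : ℝ → ℂ} (hf : Good m f) {p : ℝ}
    (hp : ∀ r, 0 < r → |PQ m f r| ≤ p) {r : ℝ} (hr : 0 < r) :
    |GQ m f r| ≤ |GQ m f 1| + p := by
  have hp0 : 0 ≤ p := (abs_nonneg _).trans (hp 1 one_pos)
  have hZ : ∀ r, 0 < r → HasDerivAt
      (fun r => GQ m f r * ((1 + r ^ (2 * m + 2)) ^ 2 / r ^ (2 * m + 2)))
      (PQ m f r * ((1 + r ^ (2 * m + 2)) ^ 2 / r ^ (2 * m + 2)) / r) r := by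
    intro r hr
    have hx : 0 < r ^ (2 * m + 2) := by positivity
    have h1 := (G_deriv hm hf.cd hf.hi hr).mul
      ((((x_deriv m hr).const_add 1).pow 2).div (x_deriv m hr) hx.ne')
    refine h1.congr_deriv ?_
    have h2 := aQ_x m hr
    unfold PQ
    simp only [Pi.pow_apply, Pi.div_apply]
    set x := r ^ (2 * m + 2)
    push_cast
    field_simp
    linear_combination (2 * GQ m f r) * h2
  have hB : ∀ r, 0 < r → HasDerivAt (fun r => p / (m + 1) * (r ^ (2 * m + 2) - (r ^ (2 * m + 2))⁻¹))
      (2 * p * (r ^ (2 * m + 2) + (r ^ (2 * m + 2))⁻¹) / r) r := by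
    intro r hr
    have hx : 0 < r ^ (2 * m + 2) := by positivity
    have h1 := ((x_deriv m hr).sub ((x_deriv m hr).inv hx.ne')).const_mul (p / (m + 1))
    refine h1.congr_deriv ?_
    set x := r ^ (2 * m + 2)
    field_simp
    ring
  have hcmp : ∀ r, 0 < r → |PQ m f r * ((1 + r ^ (2 * m + 2)) ^ 2 / r ^ (2 * m + 2)) / r| ≤
      2 * p * (r ^ (2 * m + 2) + (r ^ (2 * m + 2))⁻¹) / r := by
    intro r hr
    have hx : 0 < r ^ (2 * m + 2) := by positivity
    rw [abs_div, abs_of_pos hr, abs_mul, abs_of_pos (a := _ / _) (by positivity)]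
    apply div_le_div_of_nonneg_right _ hr.le
    set x := r ^ (2 * m + 2)
    have h1 : (1 + x) ^ 2 / x ≤ 2 * (x + x⁻¹) := by
      rw [div_le_iff₀ hx]
      have : 2 * (x + x⁻¹) * x = 2 * x ^ 2 + 2 := by field_simp
      rw [this]
      nlinarith [sq_nonneg (x - 1)]
    calc _ ≤ p * (2 * (x + x⁻¹)) := mul_le_mul (hp r hr) h1 (by positivity) hp0
      _ = _ := by ring
  have m1 := mono_Ioi (fun r hr => (hB r hr).sub (hZ r hr)) (fun r hr => by
    have := (abs_le.1 (hcmp r hr)).2; linarith)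
  have m2 := mono_Ioi (fun r hr => (hB r hr).add (hZ r hr)) (fun r hr => by
    have := (abs_le.1 (hcmp r hr)).1; linarith)
  have hx : 0 < r ^ (2 * m + 2) := by positivity
  have hfin : |GQ m f r * ((1 + r ^ (2 * m + 2)) ^ 2 / r ^ (2 * m + 2)) - 4 * GQ m f 1| ≤
      p / (m + 1) * |r ^ (2 * m + 2) - (r ^ (2 * m + 2))⁻¹| := by
    have hpm : 0 ≤ p / ((m:ℝ) + 1) := by positivity
    rcases le_total 1 r with h | h
    · have a1 := m1 (mem_Ioi.2 one_pos) (mem_Ioi.2 hr) h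
      have a2 := m2 (mem_Ioi.2 one_pos) (mem_Ioi.2 hr) h
      simp only [Pi.sub_apply, Pi.add_apply, one_pow, inv_one, sub_self, mul_zero, div_one] at a1 a2
      have := mul_le_mul_of_nonneg_left (le_abs_self (r ^ (2 * m + 2) - (r ^ (2 * m + 2))⁻¹)) hpm
      rw [abs_le]
      constructor <;> linarith
    · have a1 := m1 (mem_Ioi.2 hr) (mem_Ioi.2 one_pos) h
      have a2 := m2 (mem_Ioi.2 hr) (mem_Ioi.2 one_pos) h
      simp only [Pi.sub_apply, Pi.add_apply, one_pow, inv_one, sub_self, mul_zero, div_one] at a1 a2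
      have := mul_le_mul_of_nonneg_left (neg_le_abs (r ^ (2 * m + 2) - (r ^ (2 * m + 2))⁻¹)) hpm
      rw [abs_le]
      constructor <;> linarith
  set x := r ^ (2 * m + 2)
  have hm0 : (0:ℝ) ≤ m := Nat.cast_nonneg m
  have hpm : p / ((m:ℝ) + 1) ≤ p := div_le_self hp0 (by linarith)
  have hxx : |x - x⁻¹| ≤ (1 + x) ^ 2 / x := by
    rw [abs_le]
    have e : (1 + x) ^ 2 / x = x + 2 + x⁻¹ := by field_simp; ring
    have := inv_pos.2 hx
    rw [e]
    constructor <;> linarith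
  have h4 : 4 ≤ (1 + x) ^ 2 / x := by
    rw [le_div_iff₀ hx]; nlinarith [sq_nonneg (x - 1)]
  set W := (1 + x) ^ 2 / x
  have hW : 0 < W := by linarith
  have h5 : |GQ m f r * W| ≤ 4 * |GQ m f 1| + p * W := by
    have t1 : |GQ m f r * W| ≤ |GQ m f r * W - 4 * GQ m f 1| + |4 * GQ m f 1| := by
      have := abs_add_le (GQ m f r * W - 4 * GQ m f 1) (4 * GQ m f 1)
      simpa using this
    have t2 : |4 * GQ m f 1| = 4 * |GQ m f 1| := by rw [abs_mul]; norm_num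
    have t3 : p / (m + 1) * |x - x⁻¹| ≤ p * W := mul_le_mul hpm hxx (abs_nonneg _) hp0
    linarith
  rw [abs_mul, abs_of_pos hW] at h5
  have h6 : |GQ m f r| * W ≤ (|GQ m f 1| + p) * W := by
    nlinarith [abs_nonneg (GQ m f 1)]
  exact le_of_mul_le_mul_right h6 hW

noncomputable def FQ (m : ℕ) (f : ℝ → ℂ) (r : ℝ) : ℂ := (r : ℂ) * deriv f r - (aQ m r : ℂ) * f r

lemma inner_eq {m : ℕ} {f : ℝ → ℂ} {r : ℝ} (hr : 0 < r) :
    inner ℝ (f r) (deriv f r) = (aQ m r * ‖f r‖ ^ 2 + inner ℝ (f r) (FQ m f r)) / r := by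
  have e : r • deriv f r = aQ m r • f r + FQ m f r := by
    unfold FQ
    rw [Complex.real_smul, Complex.real_smul]
    ring
  have := congrArg (fun z => inner ℝ (f r) z) e
  simp only [inner_add_right, inner_smul_right, real_inner_self_eq_norm_sq] at this
  rw [eq_div_iff hr.ne']
  linarith

lemma inner_bd (u v : ℂ) : |2 * inner ℝ u v| ≤ ‖u‖ ^ 2 + ‖v‖ ^ 2 := by
  rw [abs_mul, abs_two]
  have := abs_real_inner_le_norm u v
  nlinarith [sq_nonneg (‖u‖ - ‖v‖)]

lemma energy {m : ℕ} (hm : 1 ≤ m) {f : ℝ → ℂ} (cd : ContDiffOn ℝ 1 f (Ioi 0))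
    (hi : IntegrableOn (fun r => ‖f r‖ ^ 2 / r) (Ioi 0))
    (hF : IntegrableOn (fun r => ‖FQ m f r‖ ^ 2 / r) (Ioi 0)) :
    ∫ s in Ioi 0, ‖f s‖ ^ 2 / s ≤ 5 * ‖f 1‖ ^ 2 + 4 * ∫ s in Ioi 0, ‖FQ m f s‖ ^ 2 / s := by
  have hm1 : (1:ℝ) ≤ m := by exact_mod_cast hm
  have hn : ∀ r, 0 < r → HasDerivAt (fun r => ‖f r‖ ^ 2) (2 * inner ℝ (f r) (deriv f r)) r :=
    fun r hr => (f_deriv cd hr).norm_sq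
  apply int_le_of_forall hi
  intro ε R hε hε1 hR
  have hII : ∀ a b : ℝ, 0 < a → ∀ φ : ℝ → ℝ, IntegrableOn φ (Ioi 0) → IntegrableOn φ (Icc a b) :=
    fun a b ha φ hφ => hφ.mono_set fun x hx => ha.trans_le hx.1
  have hIV : ∀ a b : ℝ, 0 < a → a ≤ b → ∀ φ : ℝ → ℝ, IntegrableOn φ (Ioi 0) →
      IntervalIntegrable φ volume a b := fun a b ha hab φ hφ => by
    rw [intervalIntegrable_iff_integrableOn_Ioc_of_le hab]
    exact (hII a b ha φ hφ).mono_set Ioc_subset_Icc_self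
  have up : ‖f R‖ ^ 2 - ‖f 1‖ ^ 2 ≤ ∫ s in (1:ℝ)..R, (‖FQ m f s‖ ^ 2 / s - ‖f s‖ ^ 2 / s) := by
    apply intervalIntegral.sub_le_integral_of_hasDeriv_right_of_le hR
      (g := fun r => ‖f r‖ ^ 2) (g' := fun r => 2 * inner ℝ (f r) (deriv f r))
    · exact fun r hr => (hn r (one_pos.trans_le hr.1)).continuousAt.continuousWithinAt
    · exact fun r hr => (hn r (one_pos.trans hr.1)).hasDerivWithinAt
    · exact hII 1 R one_pos _ (hF.sub hi)
    · intro r hr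
      have hr0 : 0 < r := one_pos.trans hr.1
      have ha : aQ m r ≤ -1 := by
        have h := aQ_x m hr0
        have h1 : 1 ≤ r ^ (2 * m + 2) := one_le_pow₀ hr.1.le
        by_contra hc
        push Not at hc
        have : 0 < (aQ m r + 1) * (1 + r ^ (2 * m + 2)) := mul_pos (by linarith) (by linarith)
        nlinarith
      have hb := (abs_le.1 (inner_bd (f r) (FQ m f r))).2
      show 2 * inner ℝ (f r) (deriv f r) ≤ _
      rw [inner_eq (m := m) hr0, ← sub_div, ← mul_div_assoc]
      apply div_le_div_of_nonneg_right _ hr0.le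
      nlinarith [sq_nonneg ‖f r‖]
  have hx1 : ∀ r : ℝ, 0 < r → HasDerivAt (fun r : ℝ => (1 + r ^ (2 * m + 2)) ^ 2)
      (2 * (1 + r ^ (2 * m + 2)) * ((2 * m + 2) * r ^ (2 * m + 2) / r)) r := by
    intro r hr
    refine (((x_deriv m hr).const_add 1).pow 2).congr_deriv ?_
    norm_num
  have hE : ∀ r, 0 < r → HasDerivAt (fun r => (1 + r ^ (2 * m + 2)) ^ 2 * ‖f r‖ ^ 2)
      ((1 + r ^ (2 * m + 2)) ^ 2 * (2 * m * ‖f r‖ ^ 2 + 2 * inner ℝ (f r) (FQ m f r)) / r) r := by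
    intro r hr
    refine ((hx1 r hr).mul (hn r hr)).congr_deriv ?_
    rw [inner_eq (m := m) hr]
    have h := aQ_x m hr
    set x := r ^ (2 * m + 2)
    field_simp
    linear_combination (‖f r‖ ^ 2 * (1 + x)) * h
  have low : ∫ s in ε..1, (‖f s‖ ^ 2 / s - 4 * (‖FQ m f s‖ ^ 2 / s)) ≤
      (1 + (1:ℝ) ^ (2 * m + 2)) ^ 2 * ‖f 1‖ ^ 2 - (1 + ε ^ (2 * m + 2)) ^ 2 * ‖f ε‖ ^ 2 := by
    apply intervalIntegral.integral_le_sub_of_hasDeriv_right_of_le hε1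
      (g := fun r => (1 + r ^ (2 * m + 2)) ^ 2 * ‖f r‖ ^ 2)
      (g' := fun r => (1 + r ^ (2 * m + 2)) ^ 2 * (2 * m * ‖f r‖ ^ 2 + 2 * inner ℝ (f r) (FQ m f r)) / r)
    · exact fun r hr => (hE r (hε.trans_le hr.1)).continuousAt.continuousWithinAt
    · exact fun r hr => (hE r (hε.trans hr.1)).hasDerivWithinAt
    · exact hII ε 1 hε _ (hi.sub (hF.const_mul 4))
    · intro r hr
      have hr0 : 0 < r := hε.trans hr.1
      have hb := (abs_le.1 (inner_bd (f r) (FQ m f r))).1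
      have h0 : 0 ≤ r ^ (2 * m + 2) := by positivity
      have h1 : r ^ (2 * m + 2) ≤ 1 := pow_le_one₀ hr0.le hr.2.le
      rw [← mul_div_assoc, ← sub_div]
      apply div_le_div_of_nonneg_right _ hr0.le
      set x := r ^ (2 * m + 2)
      have hφ1 : 1 ≤ (1 + x) ^ 2 := by nlinarith
      have hφ4 : (1 + x) ^ 2 ≤ 4 := by nlinarith
      have s1 : ‖f r‖ ^ 2 - ‖FQ m f r‖ ^ 2 ≤ 2 * m * ‖f r‖ ^ 2 + 2 * inner ℝ (f r) (FQ m f r) := by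
        nlinarith [sq_nonneg ‖f r‖]
      calc _ ≤ (1 + x) ^ 2 * (‖f r‖ ^ 2 - ‖FQ m f r‖ ^ 2) := by
            nlinarith [sq_nonneg ‖f r‖, sq_nonneg ‖FQ m f r‖]
        _ ≤ _ := by gcongr
  have v1 := hIV ε 1 hε hε1 _ hi
  have v2 := hIV 1 R one_pos hR _ hi
  have w1 := hIV ε 1 hε hε1 _ hF
  have w2 := hIV 1 R one_pos hR _ hF
  rw [intervalIntegral.integral_sub w2 v2] at up
  rw [intervalIntegral.integral_sub v1 (w1.const_mul 4), intervalIntegral.integral_const_mul] at low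
  rw [← intervalIntegral.integral_add_adjacent_intervals v1 v2]
  have tot : (∫ s in ε..1, ‖FQ m f s‖ ^ 2 / s) + ∫ s in (1:ℝ)..R, ‖FQ m f s‖ ^ 2 / s ≤
      ∫ s in Ioi 0, ‖FQ m f s‖ ^ 2 / s := by
    rw [intervalIntegral.integral_add_adjacent_intervals w1 w2,
      intervalIntegral.integral_of_le (hε1.trans hR)]
    refine setIntegral_mono_set hF ?_ (LE.le.eventuallyLE fun x hx => hε.trans hx.1)
    refine (ae_restrict_iff' measurableSet_Ioi).2 (ae_of_all _ fun r hr => ?_)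
    have : 0 < r := hr
    show 0 ≤ ‖FQ m f r‖ ^ 2 / r
    positivity
  have pos : 0 ≤ ∫ s in (1:ℝ)..R, ‖FQ m f s‖ ^ 2 / s := by
    apply intervalIntegral.integral_nonneg hR
    intro s hs
    have : 0 < s := one_pos.trans_le hs.1
    positivity
  have q1 : 0 ≤ (1 + ε ^ (2 * m + 2)) ^ 2 * ‖f ε‖ ^ 2 := by positivity
  norm_num at low
  nlinarith [sq_nonneg ‖f R‖]

lemma mainB {m : ℕ} (hm : 1 ≤ m) : ∃ K : ℝ, 0 ≤ K ∧ ∀ f, Good m f →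
    ∫ s in Ioi 0, ‖f s‖ ^ 2 / s ≤
      K * ((∫ s in Ioi 0, ‖LQ m f s‖ ^ 2 * s) + GQ m f 1 ^ 2 + (f 1).im ^ 2) := by
  set K1 := ∫ s in Ioi 0, Q m s ^ 2 * s ^ 3 with hK1
  set K2 := ∫ s in Ioi 0, Q m s ^ 2 / s with hK2
  have K1n : 0 ≤ K1 := setIntegral_nonneg measurableSet_Ioi fun s hs => by
    have : 0 < s := hs
    positivity
  have K2n : 0 ≤ K2 := setIntegral_nonneg measurableSet_Ioi fun s hs => by
    have : 0 < s := hs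
    positivity
  refine ⟨5 * K1 + 5 + 8 + 16 * K2 + 16 * K1 * K2, by positivity, ?_⟩
  intro f hf
  set H := ∫ s in Ioi 0, ‖LQ m f s‖ ^ 2 * s with hH
  have Hn : 0 ≤ H := setIntegral_nonneg measurableSet_Ioi fun s hs => by
    have : 0 < s := hs
    positivity
  have hP : ∀ r, 0 < r → |PQ m f r| ≤ √(K1 * H) := fun r hr => Real.abs_le_sqrt (P_sq_le hm hf hr)
  have hG : ∀ r, 0 < r → GQ m f r ^ 2 ≤ 2 * GQ m f 1 ^ 2 + 2 * (K1 * H) := by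
    intro r hr
    have h1 := G_sup hm hf hP hr
    have h2 := Real.sq_sqrt (mul_nonneg K1n Hn)
    have h3 : GQ m f r ^ 2 ≤ (|GQ m f 1| + √(K1 * H)) ^ 2 := by
      rw [← sq_abs (GQ m f r)]; gcongr
    have h4 := sq_abs (GQ m f 1)
    nlinarith [sq_nonneg (|GQ m f 1| - √(K1 * H))]
  have hFle : ∀ r, 0 < r → ‖FQ m f r‖ ^ 2 / r ≤
      2 * (‖LQ m f r‖ ^ 2 * r) + 2 * (2 * GQ m f 1 ^ 2 + 2 * (K1 * H)) * (Q m r ^ 2 / r) := by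
    intro r hr
    have e : FQ m f r = (r : ℂ) * LQ m f r - ((GQ m f r * Q m r : ℝ) : ℂ) := by
      rw [LQ_eq]
      unfold FQ
      have : (r : ℂ) ≠ 0 := by exact_mod_cast hr.ne'
      push_cast
      field_simp
      ring
    have h1 : ‖FQ m f r‖ ≤ r * ‖LQ m f r‖ + |GQ m f r * Q m r| := by
      rw [e]
      refine (norm_sub_le _ _).trans ?_
      rw [norm_mul, Complex.norm_real, Complex.norm_real, Real.norm_eq_abs, Real.norm_eq_abs,
        abs_of_pos hr]
    have h2 : ‖FQ m f r‖ ^ 2 ≤ 2 * (r * ‖LQ m f r‖) ^ 2 + 2 * (GQ m f r * Q m r) ^ 2 := by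
      have : ‖FQ m f r‖ ^ 2 ≤ (r * ‖LQ m f r‖ + |GQ m f r * Q m r|) ^ 2 := by gcongr
      have h4 := sq_abs (GQ m f r * Q m r)
      nlinarith [sq_nonneg (r * ‖LQ m f r‖ - |GQ m f r * Q m r|)]
    have h3 : (GQ m f r * Q m r) ^ 2 ≤ (2 * GQ m f 1 ^ 2 + 2 * (K1 * H)) * Q m r ^ 2 := by
      rw [mul_pow]
      have := hG r hr
      gcongr
    rw [div_le_iff₀ hr]
    have e2 : (2 * (‖LQ m f r‖ ^ 2 * r) + 2 * (2 * GQ m f 1 ^ 2 + 2 * (K1 * H)) * (Q m r ^ 2 / r)) * r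
      = 2 * (r * ‖LQ m f r‖) ^ 2 + 2 * ((2 * GQ m f 1 ^ 2 + 2 * (K1 * H)) * Q m r ^ 2) := by
      field_simp
    rw [e2]
    linarith
  have hdom : IntegrableOn (fun r => 2 * (‖LQ m f r‖ ^ 2 * r)
      + 2 * (2 * GQ m f 1 ^ 2 + 2 * (K1 * H)) * (Q m r ^ 2 / r)) (Ioi 0) :=
    (hf.hh.const_mul 2).add ((int_Qdiv m hm).const_mul _)
  have hFi : IntegrableOn (fun r => ‖FQ m f r‖ ^ 2 / r) (Ioi 0) := by
    refine Integrable.mono' hdom ?_ ?_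
    · apply ContinuousOn.aestronglyMeasurable _ measurableSet_Ioi
      have c1 : ContinuousOn (FQ m f) (Ioi 0) :=
        (Complex.continuous_ofReal.continuousOn.mul (f'_cont hf.cd)).sub
          ((Complex.continuous_ofReal.comp (aQ_cont m)).continuousOn.mul (f_cont hf.cd))
      exact (c1.norm.pow 2).div continuousOn_id (fun x hx => (ne_of_gt hx))
    · refine (ae_restrict_iff' measurableSet_Ioi).2 (ae_of_all _ fun r hr => ?_)
      have hr : 0 < r := hr
      rw [Real.norm_eq_abs, abs_of_nonneg (by positivity)]
      exact hFle r hr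
  have hFint : ∫ s in Ioi 0, ‖FQ m f s‖ ^ 2 / s ≤
      2 * H + 2 * (2 * GQ m f 1 ^ 2 + 2 * (K1 * H)) * K2 := by
    have := setIntegral_mono_on hFi hdom measurableSet_Ioi (fun r hr => hFle r hr)
    rw [integral_add (hf.hh.const_mul 2) ((int_Qdiv m hm).const_mul _), integral_const_mul,
      integral_const_mul] at this
    exact this
  have hen := energy hm hf.cd hf.hi hFi
  have hre : (f 1).re ^ 2 ≤ K1 * H := by
    have h1 := P_sq_le hm hf one_pos
    have e : PQ m f 1 = Q m 1 * (f 1).re := by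
      unfold PQ; rw [aQ_one]; ring
    rw [e, mul_pow] at h1
    have hq : 1 ≤ Q m 1 ^ 2 := by
      rw [Q_sq]
      norm_num
      nlinarith [Nat.cast_nonneg (α := ℝ) m]
    nlinarith [sq_nonneg (f 1).re]
  have hf1 : ‖f 1‖ ^ 2 = (f 1).re ^ 2 + (f 1).im ^ 2 := by
    rw [Complex.sq_norm, Complex.normSq_apply]; ring
  have t1 : 0 ≤ GQ m f 1 ^ 2 := sq_nonneg _
  have t2 : 0 ≤ (f 1).im ^ 2 := sq_nonneg _
  rw [hf1] at hen
  set g := GQ m f 1 ^ 2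
  set i := (f 1).im ^ 2
  have n1 := mul_nonneg K1n Hn
  have n2 := mul_nonneg K2n Hn
  have n3 := mul_nonneg K1n K2n
  have n4 := mul_nonneg n3 Hn
  have n5 := mul_nonneg K1n t1
  have n6 := mul_nonneg K1n t2
  have n7 := mul_nonneg K2n t1
  have n8 := mul_nonneg K2n t2
  have n9 := mul_nonneg n3 t1
  have n10 := mul_nonneg n3 t2
  nlinarith

noncomputable def kQ (m : ℕ) (α β : ℝ) (r : ℝ) : ℂ :=
  (α : ℂ) * (((aQ m r + 1) * Q m r : ℝ) : ℂ) + (β : ℂ) * (Complex.I * (Q m r : ℂ))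

lemma kQ_re (m : ℕ) (α β r : ℝ) : (kQ m α β r).re = α * ((aQ m r + 1) * Q m r) := by
  simp [kQ]

lemma kQ_im (m : ℕ) (α β r : ℝ) : (kQ m α β r).im = β * Q m r := by
  simp [kQ]

lemma kQ_deriv {m : ℕ} (hm : 1 ≤ m) (α β : ℝ) {r : ℝ} (hr : 0 < r) :
    HasDerivAt (kQ m α β) ((α : ℂ) * (((-(1 / 2) * Q m r ^ 2 * r) * Q m r
      + (aQ m r + 1) * (aQ m r * Q m r / r) : ℝ) : ℂ)
      + (β : ℂ) * (Complex.I * ((aQ m r * Q m r / r : ℝ) : ℂ))) r := by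
  have h1 := (((aQ_deriv m r).add_const 1).mul (Q_deriv m hm hr)).ofReal_comp.const_mul (α : ℂ)
  have h2 := ((Q_deriv m hm hr).ofReal_comp.const_mul Complex.I).const_mul (β : ℂ)
  exact h1.add h2

lemma kQ_cont (m : ℕ) (α β : ℝ) : Continuous (kQ m α β) := by
  have := aQ_cont m
  have := Q_cont m
  unfold kQ
  fun_prop

lemma kQ_cd {m : ℕ} (hm : 1 ≤ m) (α β : ℝ) : ContDiffOn ℝ 1 (kQ m α β) (Ioi 0) := by
  rw [contDiffOn_one_iff_derivWithin isOpen_Ioi.uniqueDiffOn]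
  refine ⟨fun r hr => (kQ_deriv hm α β hr).differentiableAt.differentiableWithinAt, ?_⟩
  have hne : ∀ x ∈ Ioi (0:ℝ), x ≠ 0 := fun x hx => ne_of_gt hx
  have ha := (aQ_cont m).continuousOn (s := Ioi (0:ℝ))
  have hq := (Q_cont m).continuousOn (s := Ioi (0:ℝ))
  have h1 : ContinuousOn (fun r => aQ m r * Q m r / r) (Ioi 0) := (ha.mul hq).div continuousOn_id hne
  refine ContinuousOn.congr (f := fun r => (α : ℂ) * (((-(1 / 2) * Q m r ^ 2 * r) * Q m r
      + (aQ m r + 1) * (aQ m r * Q m r / r) : ℝ) : ℂ)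
      + (β : ℂ) * (Complex.I * ((aQ m r * Q m r / r : ℝ) : ℂ))) ?_
    fun r hr => by rw [derivWithin_of_isOpen isOpen_Ioi hr]; exact (kQ_deriv hm α β hr).deriv
  refine (continuousOn_const.mul (Complex.continuous_ofReal.comp_continuousOn ?_)).add
    (continuousOn_const.mul (continuousOn_const.mul (Complex.continuous_ofReal.comp_continuousOn h1)))
  exact (by fun_prop : ContinuousOn (fun r => (-(1 / 2) * Q m r ^ 2 * r) * Q m r) (Ioi 0)).add
    ((ha.add continuousOn_const).mul h1)

lemma kQ_normsq (m : ℕ) (α β r : ℝ) :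
    ‖kQ m α β r‖ ^ 2 ≤ (α ^ 2 * (m + 1) ^ 2 + β ^ 2) * Q m r ^ 2 := by
  rw [Complex.sq_norm, Complex.normSq_apply, kQ_re, kQ_im]
  have := mul_le_mul_of_nonneg_left (aQ1_sq_le m r) (mul_nonneg (sq_nonneg α) (sq_nonneg (Q m r)))
  nlinarith

lemma kQ_hi {m : ℕ} (hm : 1 ≤ m) (α β : ℝ) :
    IntegrableOn (fun r => ‖kQ m α β r‖ ^ 2 / r) (Ioi 0) := by
  refine Integrable.mono' ((int_Qdiv m hm).const_mul (α ^ 2 * (m + 1) ^ 2 + β ^ 2)) ?_ ?_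
  · apply ContinuousOn.aestronglyMeasurable _ measurableSet_Ioi
    exact ((kQ_cont m α β).norm.pow 2).continuousOn.div continuousOn_id (fun x hx => (ne_of_gt hx))
  · refine (ae_restrict_iff' measurableSet_Ioi).2 (ae_of_all _ fun r hr => ?_)
    have hr : 0 < r := hr
    rw [Real.norm_eq_abs, abs_of_nonneg (by positivity), ← mul_div_assoc]
    exact div_le_div_of_nonneg_right (kQ_normsq m α β r) hr.le

lemma kQ_int_le {m : ℕ} (hm : 1 ≤ m) (α β : ℝ) :
    ∫ r in Ioi 0, ‖kQ m α β r‖ ^ 2 / r ≤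
      (α ^ 2 * (m + 1) ^ 2 + β ^ 2) * ∫ r in Ioi 0, Q m r ^ 2 / r := by
  rw [← integral_const_mul]
  refine setIntegral_mono_on (kQ_hi hm α β) ((int_Qdiv m hm).const_mul _) measurableSet_Ioi ?_
  intro r hr
  have hr : 0 < r := hr
  rw [← mul_div_assoc]
  exact div_le_div_of_nonneg_right (kQ_normsq m α β r) hr.le

lemma kQ_G {m : ℕ} (hm : 1 ≤ m) (α β : ℝ) {r : ℝ} (hr : 0 < r) :
    GQ m (kQ m α β) r = α * (r ^ 2 * Q m r ^ 2 / 2) := by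
  unfold GQ
  have hq := Q_cont m
  have ha := aQ_cont m
  have h : ∫ s in (0:ℝ)..r, α * (s * (aQ m s + 1) * Q m s ^ 2)
      = α * (r ^ 2 * Q m r ^ 2 / 2) - α * ((0:ℝ) ^ 2 * Q m 0 ^ 2 / 2) := by
    apply intervalIntegral.integral_eq_sub_of_hasDerivAt_of_le hr.le
      (f := fun r => α * (r ^ 2 * Q m r ^ 2 / 2))
    · fun_prop
    · intro s hs
      have hs0 : 0 < s := hs.1
      have h1 := ((((hasDerivAt_pow 2 s).mul ((Q_deriv m hm hs0).pow 2)).div_const 2)).const_mul α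
      refine h1.congr_deriv ?_
      simp only [Pi.pow_apply]
      push_cast
      field_simp
      ring
    · apply Continuous.intervalIntegrable
      fun_prop
  have e : ∀ s, Q m s * (kQ m α β s).re * s = α * (s * (aQ m s + 1) * Q m s ^ 2) := by
    intro s; rw [kQ_re]; ring
  simp only [e]
  rw [h]; ring

lemma kQ_LQ {m : ℕ} (hm : 1 ≤ m) (α β : ℝ) {r : ℝ} (hr : 0 < r) :
    LQ m (kQ m α β) r = 0 := by
  rw [LQ_eq, (kQ_deriv hm α β hr).deriv, kQ_G hm α β hr]
  unfold kQ
  have : (r : ℂ) ≠ 0 := by exact_mod_cast hr.ne'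
  push_cast
  field_simp
  ring

lemma sub_G {m : ℕ} (hm : 1 ≤ m) {f g : ℝ → ℂ} (cf : ContDiffOn ℝ 1 f (Ioi 0))
    (cg : ContDiffOn ℝ 1 g (Ioi 0)) (hf : IntegrableOn (fun r => ‖f r‖ ^ 2 / r) (Ioi 0))
    (hg : IntegrableOn (fun r => ‖g r‖ ^ 2 / r) (Ioi 0)) {r : ℝ} (hr : 0 < r) :
    GQ m (fun r => f r - g r) r = GQ m f r - GQ m g r := by
  unfold GQ
  rw [← intervalIntegral.integral_sub]
  · congr 1
    ext s
    rw [Complex.sub_re]; ring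
  · rw [intervalIntegrable_iff_integrableOn_Ioc_of_le hr.le]
    exact (Gint hm cf hf).mono_set fun x hx => hx.1
  · rw [intervalIntegrable_iff_integrableOn_Ioc_of_le hr.le]
    exact (Gint hm cg hg).mono_set fun x hx => hx.1

lemma sub_LQ {m : ℕ} (hm : 1 ≤ m) {f g : ℝ → ℂ} (cf : ContDiffOn ℝ 1 f (Ioi 0))
    (cg : ContDiffOn ℝ 1 g (Ioi 0)) (hf : IntegrableOn (fun r => ‖f r‖ ^ 2 / r) (Ioi 0))
    (hg : IntegrableOn (fun r => ‖g r‖ ^ 2 / r) (Ioi 0)) {r : ℝ} (hr : 0 < r) :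
    LQ m (fun r => f r - g r) r = LQ m f r - LQ m g r := by
  rw [LQ_eq, LQ_eq, LQ_eq, sub_G hm cf cg hf hg hr,
    ((f_deriv cf hr).fun_sub (f_deriv cg hr)).deriv]
  push_cast
  ring

lemma sub_hi {f g : ℝ → ℂ} (cf : ContDiffOn ℝ 1 f (Ioi 0))
    (cg : ContDiffOn ℝ 1 g (Ioi 0)) (hf : IntegrableOn (fun r => ‖f r‖ ^ 2 / r) (Ioi 0))
    (hg : IntegrableOn (fun r => ‖g r‖ ^ 2 / r) (Ioi 0)) :
    IntegrableOn (fun r => ‖f r - g r‖ ^ 2 / r) (Ioi 0) := by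
  refine Integrable.mono' ((hf.const_mul 2).add (hg.const_mul 2)) ?_ ?_
  · apply ContinuousOn.aestronglyMeasurable _ measurableSet_Ioi
    exact (((f_cont cf).sub (f_cont cg)).norm.pow 2).div continuousOn_id (fun x hx => (ne_of_gt hx))
  · refine (ae_restrict_iff' measurableSet_Ioi).2 (ae_of_all _ fun r hr => ?_)
    have hr : 0 < r := hr
    rw [Real.norm_eq_abs, abs_of_nonneg (by positivity)]
    simp only [Pi.add_apply]
    rw [← mul_div_assoc, ← mul_div_assoc, ← add_div]
    apply div_le_div_of_nonneg_right _ hr.le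
    have := norm_sub_le (f r) (g r)
    have h2 : ‖f r - g r‖ ^ 2 ≤ (‖f r‖ + ‖g r‖) ^ 2 := by gcongr
    nlinarith [sq_nonneg (‖f r‖ - ‖g r‖)]

lemma Good_sub {m : ℕ} (hm : 1 ≤ m) {f : ℝ → ℂ} (hf : Good m f) (α β : ℝ) :
    Good m (fun r => f r - kQ m α β r) where
  cd := hf.cd.sub (kQ_cd hm α β)
  hi := sub_hi hf.cd (kQ_cd hm α β) hf.hi (kQ_hi hm α β)
  lim := by
    have h1 : Tendsto (fun r => r ^ 2 * Q m r * (kQ m α β r).re) (𝓝[>] 0) (𝓝 0) := by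
      apply Tendsto.mono_left _ nhdsWithin_le_nhds
      have hc : Continuous (fun r => r ^ 2 * Q m r * (kQ m α β r).re) := by
        have := Q_cont m
        have := kQ_cont m α β
        have := Complex.continuous_re.comp this
        exact (by fun_prop : Continuous (fun r => r ^ 2 * Q m r)).mul this
      have := hc.tendsto 0
      simpa using this
    have h2 := hf.lim.sub h1
    rw [sub_zero] at h2
    refine h2.congr fun r => ?_
    rw [Complex.sub_re]; ring
  hh := by
    refine hf.hh.congr_fun (fun r hr => ?_) measurableSet_Ioi
    simp only
    rw [sub_LQ hm hf.cd (kQ_cd hm α β) hf.hi (kQ_hi hm α β) hr, kQ_LQ hm α β hr, sub_zero]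

lemma sq3 {a b c d : ℝ} (ha : 0 ≤ a) (h : a ≤ b + c + d) : a ^ 2 ≤ 3 * (b ^ 2 + c ^ 2 + d ^ 2) := by
  have : a ^ 2 ≤ (b + c + d) ^ 2 := by gcongr
  nlinarith [sq_nonneg (b - c), sq_nonneg (b - d), sq_nonneg (c - d)]

lemma two_way {m : ℕ} (hm : 1 ≤ m) {f : ℝ → ℂ} (cd : ContDiffOn ℝ 1 f (Ioi 0))
    (hi : IntegrableOn (fun r => ‖f r‖ ^ 2 / r) (Ioi 0)) {r : ℝ} (hr : 0 < r) :
    (‖LQ m f r‖ ^ 2 * r ≤ 3 * (‖deriv f r‖ ^ 2 * r) + 3 * (m + 2) ^ 2 * (‖f r‖ ^ 2 / r) +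
      3 * ((∫ s in Ioi 0, Q m s ^ 2 * s ^ 3) * ∫ s in Ioi 0, ‖f s‖ ^ 2 / s) * (Q m r ^ 2 / r)) ∧
    (‖deriv f r‖ ^ 2 * r ≤ 3 * (‖LQ m f r‖ ^ 2 * r) + 3 * (m + 2) ^ 2 * (‖f r‖ ^ 2 / r) +
      3 * ((∫ s in Ioi 0, Q m s ^ 2 * s ^ 3) * ∫ s in Ioi 0, ‖f s‖ ^ 2 / s) * (Q m r ^ 2 / r)) := by
  have hG := G_sq_le hm cd hi hr
  set K := (∫ s in Ioi 0, Q m s ^ 2 * s ^ 3) * ∫ s in Ioi 0, ‖f s‖ ^ 2 / s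
  have e := LQ_eq m f r
  set X := ((aQ m r / r : ℝ) : ℂ) * f r with hX
  set Y := ((GQ m f r / r * Q m r : ℝ) : ℂ) with hY
  have nX : ‖X‖ ^ 2 * r ≤ (m + 2) ^ 2 * (‖f r‖ ^ 2 / r) := by
    rw [hX, norm_mul, Complex.norm_real, mul_pow, Real.norm_eq_abs, sq_abs, div_pow]
    have e : aQ m r ^ 2 / r ^ 2 * ‖f r‖ ^ 2 * r = aQ m r ^ 2 * (‖f r‖ ^ 2 / r) := by field_simp
    rw [e]
    exact mul_le_mul_of_nonneg_right (aQ_sq_le m r) (by positivity)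
  have nY : ‖Y‖ ^ 2 * r ≤ K * (Q m r ^ 2 / r) := by
    rw [hY, Complex.norm_real, Real.norm_eq_abs, sq_abs, mul_pow, div_pow]
    have e : GQ m f r ^ 2 / r ^ 2 * Q m r ^ 2 * r = GQ m f r ^ 2 * (Q m r ^ 2 / r) := by field_simp
    rw [e]
    exact mul_le_mul_of_nonneg_right hG (by positivity)
  constructor
  · have h1 : ‖LQ m f r‖ ≤ ‖deriv f r‖ + ‖X‖ + ‖Y‖ := by
      rw [e]
      exact (norm_add_le _ _).trans (add_le_add_left (norm_sub_le _ _) _)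
    have h2 := mul_le_mul_of_nonneg_right (sq3 (norm_nonneg _) h1) hr.le
    nlinarith
  · have h1 : ‖deriv f r‖ ≤ ‖LQ m f r‖ + ‖X‖ + ‖Y‖ := by
      have e' : deriv f r = LQ m f r + X - Y := by rw [e]; ring
      rw [e']
      exact (norm_sub_le _ _).trans (add_le_add_left (norm_add_le _ _) _)
    have h2 := mul_le_mul_of_nonneg_right (sq3 (norm_nonneg _) h1) hr.le
    nlinarith

lemma Good_of {m : ℕ} (hm : 1 ≤ m) {f : ℝ → ℂ} (cd : ContDiffOn ℝ 1 f (Ioi 0))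
    (hi : IntegrableOn (fun r => ‖f r‖ ^ 2 / r) (Ioi 0))
    (hd : IntegrableOn (fun r => ‖deriv f r‖ ^ 2 * r) (Ioi 0)) : Good m f where
  cd := cd
  hi := hi
  lim := by
    set B := ‖f 1‖ ^ 2 + ∫ s in Ioi 0, (‖f s‖ ^ 2 / s + ‖deriv f s‖ ^ 2 * s) with hB
    have hii : IntegrableOn (fun s => ‖f s‖ ^ 2 / s + ‖deriv f s‖ ^ 2 * s) (Ioi 0) := hi.add hd
    have hb : ∀ r ∈ Ioo (0:ℝ) 1, ‖f r‖ ^ 2 ≤ B := by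
      intro r hr
      have h1 : ∫ s in r..1, -(‖f s‖ ^ 2 / s + ‖deriv f s‖ ^ 2 * s) ≤ ‖f 1‖ ^ 2 - ‖f r‖ ^ 2 := by
        have hn : ∀ r, 0 < r → HasDerivAt (fun r => ‖f r‖ ^ 2) (2 * inner ℝ (f r) (deriv f r)) r :=
          fun r hr => (f_deriv cd hr).norm_sq
        apply intervalIntegral.integral_le_sub_of_hasDeriv_right_of_le hr.2.le
          (g := fun r => ‖f r‖ ^ 2) (g' := fun r => 2 * inner ℝ (f r) (deriv f r))
        · exact fun s hs => (hn s (hr.1.trans_le hs.1)).continuousAt.continuousWithinAt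
        · exact fun s hs => (hn s (hr.1.trans hs.1)).hasDerivWithinAt
        · exact hii.neg.mono_set fun s hs => hr.1.trans_le hs.1
        · intro s hs
          have hs0 : 0 < s := hr.1.trans hs.1
          have h2 := (abs_le.1 (inner_bd (f s) (s • deriv f s))).1
          rw [inner_smul_right, norm_smul, Real.norm_eq_abs, abs_of_pos hs0] at h2
          have h3 : ‖f s‖ ^ 2 / s + ‖deriv f s‖ ^ 2 * s = (‖f s‖ ^ 2 + (s * ‖deriv f s‖) ^ 2) / s := by
            field_simp
          rw [h3, neg_le_iff_add_nonneg, ← mul_le_mul_iff_of_pos_right hs0]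
          rw [add_mul, div_mul_cancel₀ _ hs0.ne']
          linarith
      rw [intervalIntegral.integral_neg, intervalIntegral.integral_of_le hr.2.le] at h1
      have h4 : ∫ s in Ioc r 1, (‖f s‖ ^ 2 / s + ‖deriv f s‖ ^ 2 * s) ≤
          ∫ s in Ioi 0, (‖f s‖ ^ 2 / s + ‖deriv f s‖ ^ 2 * s) := by
        refine setIntegral_mono_set hii ?_ (LE.le.eventuallyLE fun x hx => hr.1.trans hx.1)
        refine (ae_restrict_iff' measurableSet_Ioi).2 (ae_of_all _ fun r hr => ?_)
        have : 0 < r := hr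
        show 0 ≤ ‖f r‖ ^ 2 / r + ‖deriv f r‖ ^ 2 * r
        positivity
      linarith
    have h1 : Tendsto (fun r => r ^ 2 * Q m r * √B) (𝓝[>] 0) (𝓝 0) := by
      apply Tendsto.mono_left _ nhdsWithin_le_nhds
      have hc : Continuous (fun r => r ^ 2 * Q m r * √B) := by
        have := Q_cont m
        fun_prop
      have := hc.tendsto 0
      simpa using this
    refine squeeze_zero_norm' ?_ h1
    filter_upwards [Ioo_mem_nhdsGT one_pos] with r hr
    have hq := Q_pos m hr.1
    rw [norm_mul, Real.norm_eq_abs, Real.norm_eq_abs, abs_of_nonneg (a := r ^ 2 * _) (by positivity)]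
    apply mul_le_mul_of_nonneg_left _ (by positivity)
    exact Real.abs_le_sqrt ((re_sq_le _).trans (hb r hr))
  hh := by
    refine Integrable.mono' (((hd.const_mul 3).add (hi.const_mul (3 * (m + 2) ^ 2))).add
      ((int_Qdiv m hm).const_mul (3 * ((∫ s in Ioi 0, Q m s ^ 2 * s ^ 3) * ∫ s in Ioi 0, ‖f s‖ ^ 2 / s)))) ?_ ?_
    · apply ContinuousOn.aestronglyMeasurable _ measurableSet_Ioi
      exact ((LQ_cont hm cd hi).norm.pow 2).mul continuousOn_id
    · refine (ae_restrict_iff' measurableSet_Ioi).2 (ae_of_all _ fun r hr => ?_)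
      have hr : 0 < r := hr
      rw [Real.norm_eq_abs, abs_of_nonneg (by positivity)]
      exact (two_way hm cd hi hr).1

lemma pair_int {g Z : ℝ → ℂ} (hg : ContinuousOn g (Ioi 0)) (hZ : Continuous Z)
    (hs : HasCompactSupport Z ∧ tsupport Z ⊆ Ioi 0) :
    IntegrableOn (fun r => g r * (starRingEnd ℂ) (Z r) * (r : ℂ)) (Ioi 0) := by
  apply Integrable.integrableOn
  rw [← integrableOn_iff_integrable_of_support_subset (s := tsupport Z)]
  · refine ContinuousOn.integrableOn_compact (show IsCompact (tsupport Z) from hs.1) ?_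
    refine ((hg.mono hs.2).mul ?_).mul Complex.continuous_ofReal.continuousOn
    exact (Complex.continuous_conj.comp hZ).continuousOn
  · intro r hr
    apply subset_tsupport
    intro h
    apply hr
    simp [h]

lemma pair_bd {Z : ℝ → ℂ} (hZ : Continuous Z)
    (hs : HasCompactSupport Z ∧ tsupport Z ⊆ Ioi 0) : ∃ K : ℝ, 0 ≤ K ∧ ∀ g : ℝ → ℂ,
    ContinuousOn g (Ioi 0) → IntegrableOn (fun r => ‖g r‖ ^ 2 / r) (Ioi 0) →
    iprod g Z ^ 2 ≤ K * ∫ r in Ioi 0, ‖g r‖ ^ 2 / r := by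
  have hZi : IntegrableOn (fun r => ‖Z r‖ ^ 2 * r ^ 3) (Ioi 0) := by
    apply Integrable.integrableOn
    apply Continuous.integrable_of_hasCompactSupport
    · fun_prop
    · have : HasCompactSupport (fun r => ‖Z r‖ ^ 2) := hs.1.comp_left (g := fun z => ‖z‖ ^ 2) (by simp)
      exact this.mul_right
  have hK : 0 ≤ ∫ r in Ioi 0, ‖Z r‖ ^ 2 * r ^ 3 := setIntegral_nonneg measurableSet_Ioi fun s hs => by
    have : 0 < s := hs
    positivity
  refine ⟨(2 * Real.pi) ^ 2 * ∫ r in Ioi 0, ‖Z r‖ ^ 2 * r ^ 3, by positivity, ?_⟩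
  intro g hg hgi
  have e1 : EqOn (fun s => (‖Z s‖ * s * √s) ^ 2) (fun s => ‖Z s‖ ^ 2 * s ^ 3) (Ioi 0) := by
    intro s hs
    have hs : 0 < s := hs
    simp only [mul_pow, Real.sq_sqrt hs.le]; ring
  have e2 : EqOn (fun s => (‖g s‖ / √s) ^ 2) (fun s => ‖g s‖ ^ 2 / s) (Ioi 0) := by
    intro s hs
    have hs : 0 < s := hs
    simp only [div_pow, Real.sq_sqrt hs.le]
  have e3 : EqOn (fun s => (‖Z s‖ * s * √s) * (‖g s‖ / √s))
      (fun s => ‖g s * (starRingEnd ℂ) (Z s) * (s : ℂ)‖) (Ioi 0) := by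
    intro s hs
    have hs : 0 < s := hs
    have := Real.sqrt_pos.2 hs
    simp only [norm_mul, RCLike.norm_conj, Complex.norm_real, Real.norm_eq_abs, abs_of_pos hs]
    field_simp
  have h := cs_aux (s := Ioi 0) (f := fun s => ‖Z s‖ * s * √s) (g := fun s => ‖g s‖ / √s)
    (hZi.congr_fun e1.symm measurableSet_Ioi)
    (hgi.congr_fun e2.symm measurableSet_Ioi)
    (IntegrableOn.congr_fun (pair_int hg hZ hs).norm e3.symm measurableSet_Ioi)
  rw [setIntegral_congr_fun measurableSet_Ioi e1,
    setIntegral_congr_fun measurableSet_Ioi e2,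
    setIntegral_congr_fun measurableSet_Ioi e3] at h
  unfold iprod
  rw [mul_pow, mul_assoc]
  apply mul_le_mul_of_nonneg_left _ (by positivity)
  refine le_trans ?_ h
  refine (re_sq_le _).trans ?_
  have := norm_integral_le_integral_norm (μ := volume.restrict (Ioi 0))
    (fun s => g s * (starRingEnd ℂ) (Z s) * (s : ℂ))
  gcongr

lemma pair_split {m : ℕ} (hm : 1 ≤ m) {f Z : ℝ → ℂ} (hf : ContinuousOn f (Ioi 0)) (hZ : Continuous Z)
    (hs : HasCompactSupport Z ∧ tsupport Z ⊆ Ioi 0) (α β : ℝ) :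
    iprod f Z = iprod (fun r => f r - kQ m α β r) Z + α * iprod (fun r => (LamQ m r : ℂ)) Z
      + β * iprod (fun r => Complex.I * (Q m r : ℂ)) Z := by
  have hQ := Q_cont m
  have ha := aQ_cont m
  have i1 : IntegrableOn (fun r => (f r - kQ m α β r) * (starRingEnd ℂ) (Z r) * (r : ℂ)) (Ioi 0) :=
    pair_int (hf.sub (kQ_cont m α β).continuousOn) hZ hs
  have i2 : IntegrableOn (fun r => (LamQ m r : ℂ) * (starRingEnd ℂ) (Z r) * (r : ℂ)) (Ioi 0) := by
    apply pair_int _ hZ hs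
    refine ContinuousOn.congr (f := fun r => (((aQ m r + 1) * Q m r : ℝ) : ℂ)) ?_ ?_
    · fun_prop
    · intro r hr
      simp only
      rw [LamQ_eq m hm hr]
  have i3 : IntegrableOn (fun r => (Complex.I * (Q m r : ℂ)) * (starRingEnd ℂ) (Z r) * (r : ℂ)) (Ioi 0) := by
    apply pair_int _ hZ hs
    fun_prop
  have i12 : IntegrableOn (fun r => (f r - kQ m α β r) * (starRingEnd ℂ) (Z r) * (r : ℂ)
      + (α : ℂ) * ((LamQ m r : ℂ) * (starRingEnd ℂ) (Z r) * (r : ℂ))) (Ioi 0) :=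
    Integrable.add i1 (i2.const_mul _)
  have e : ∫ r in Ioi 0, f r * (starRingEnd ℂ) (Z r) * (r : ℂ) =
      (∫ r in Ioi 0, (f r - kQ m α β r) * (starRingEnd ℂ) (Z r) * (r : ℂ)) +
      (α : ℂ) * (∫ r in Ioi 0, (LamQ m r : ℂ) * (starRingEnd ℂ) (Z r) * (r : ℂ)) +
      (β : ℂ) * ∫ r in Ioi 0, (Complex.I * (Q m r : ℂ)) * (starRingEnd ℂ) (Z r) * (r : ℂ) := by
    rw [← integral_const_mul, ← integral_const_mul, ← integral_add i1 (i2.const_mul _),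
      ← integral_add i12 (i3.const_mul _)]
    apply setIntegral_congr_fun measurableSet_Ioi
    intro r hr
    simp only
    rw [LamQ_eq m hm hr]
    unfold kQ
    ring
  unfold iprod
  rw [e]
  simp only [Complex.add_re, Complex.re_ofReal_mul]
  ring

lemma cramer {x y α β A1 A2 B1 B2 L1 L2 N : ℝ} (hd : A1 * B2 - B1 * A2 ≠ 0)
    (s1 : 0 = x + α * A1 + β * B1) (s2 : 0 = y + α * A2 + β * B2)
    (p1 : x ^ 2 ≤ L1 * N) (p2 : y ^ 2 ≤ L2 * N) :
    α ^ 2 ≤ 2 * (L1 * B2 ^ 2 + L2 * B1 ^ 2) / (A1 * B2 - B1 * A2) ^ 2 * N := by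
  have hd2 : 0 < (A1 * B2 - B1 * A2) ^ 2 := by positivity
  rw [div_mul_eq_mul_div, le_div_iff₀ hd2]
  have e : α * (A1 * B2 - B1 * A2) = y * B1 - x * B2 := by
    linear_combination B1 * s2 - B2 * s1
  have : α ^ 2 * (A1 * B2 - B1 * A2) ^ 2 = (y * B1 - x * B2) ^ 2 := by rw [← mul_pow, e]
  rw [this]
  have q1 := mul_le_mul_of_nonneg_right p1 (sq_nonneg B2)
  have q2 := mul_le_mul_of_nonneg_right p2 (sq_nonneg B1)
  have q3 := sq_nonneg (y * B1 + x * B2)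
  linarith

lemma cramer2 {x y α β A1 A2 B1 B2 L1 L2 N : ℝ} (hd : A1 * B2 - B1 * A2 ≠ 0)
    (s1 : 0 = x + α * A1 + β * B1) (s2 : 0 = y + α * A2 + β * B2)
    (p1 : x ^ 2 ≤ L1 * N) (p2 : y ^ 2 ≤ L2 * N) :
    β ^ 2 ≤ 2 * (L2 * A1 ^ 2 + L1 * A2 ^ 2) / (A1 * B2 - B1 * A2) ^ 2 * N := by
  have h := cramer (x := y) (y := x) (α := β) (β := α) (A1 := B2) (A2 := B1) (B1 := A2) (B2 := A1)
    (by intro h; apply hd; linarith) (by linarith) (by linarith) p2 p1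
  rwa [mul_comm B2 A1, mul_comm A2 B1] at h

lemma norm_add_sq_le' (u v : ℂ) : ‖u + v‖ ^ 2 ≤ 2 * ‖u‖ ^ 2 + 2 * ‖v‖ ^ 2 := by
  have h3 := norm_add_le u v
  have h2 : ‖u + v‖ ^ 2 ≤ (‖u‖ + ‖v‖) ^ 2 := by gcongr
  have h4 := sq_nonneg (‖u‖ - ‖v‖)
  linarith

lemma N_split {f k : ℝ → ℂ} (hf : IntegrableOn (fun r => ‖f r‖ ^ 2 / r) (Ioi 0))
    (hg : IntegrableOn (fun r => ‖f r - k r‖ ^ 2 / r) (Ioi 0))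
    (hk : IntegrableOn (fun r => ‖k r‖ ^ 2 / r) (Ioi 0)) :
    ∫ s in Ioi 0, ‖f s‖ ^ 2 / s ≤ 2 * (∫ s in Ioi 0, ‖f s - k s‖ ^ 2 / s)
      + 2 * ∫ s in Ioi 0, ‖k s‖ ^ 2 / s := by
  rw [← integral_const_mul, ← integral_const_mul,
    ← integral_add (hg.const_mul 2) (hk.const_mul 2)]
  refine setIntegral_mono_on hf ((hg.const_mul 2).add (hk.const_mul 2)) measurableSet_Ioi ?_
  intro r hr
  have hr : 0 < r := hr
  rw [← mul_div_assoc, ← mul_div_assoc, ← add_div]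
  apply div_le_div_of_nonneg_right _ hr.le
  have := norm_add_sq_le' (f r - k r) (k r)
  rwa [sub_add_cancel] at this

lemma shift {m : ℕ} (hm : 1 ≤ m) {K : ℝ} (hK : 0 ≤ K)
    (hB : ∀ f, Good m f → ∫ s in Ioi 0, ‖f s‖ ^ 2 / s ≤ K *
      ((∫ s in Ioi 0, ‖LQ m f s‖ ^ 2 * s) + GQ m f 1 ^ 2 + (f 1).im ^ 2))
    {f : ℝ → ℂ} (hf : Good m f) : ∃ α β : ℝ, Good m (fun r => f r - kQ m α β r) ∧
    ∫ s in Ioi 0, ‖f s - kQ m α β s‖ ^ 2 / s ≤ K * ∫ s in Ioi 0, ‖LQ m f s‖ ^ 2 * s := by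
  have hQ1 := Q_pos m one_pos
  refine ⟨GQ m f 1 / (Q m 1 ^ 2 / 2), (f 1).im / Q m 1, ?_, ?_⟩
  · exact Good_sub hm hf _ _
  generalize hα : GQ m f 1 / (Q m 1 ^ 2 / 2) = α
  generalize hβ : (f 1).im / Q m 1 = β
  have hg := Good_sub hm hf α β
  have hG1 : GQ m (fun r => f r - kQ m α β r) 1 = 0 := by
    rw [sub_G hm hf.cd (kQ_cd hm α β) hf.hi (kQ_hi hm α β) one_pos, kQ_G hm α β one_pos, ← hα]
    field_simp
    ring
  have hI1 : (f 1 - kQ m α β 1).im = 0 := by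
    rw [Complex.sub_im, kQ_im, ← hβ]
    field_simp
    ring
  have hLg : ∫ s in Ioi 0, ‖LQ m (fun r => f r - kQ m α β r) s‖ ^ 2 * s = ∫ s in Ioi 0, ‖LQ m f s‖ ^ 2 * s := by
    apply setIntegral_congr_fun measurableSet_Ioi
    intro r hr
    simp only
    rw [sub_LQ hm hf.cd (kQ_cd hm α β) hf.hi (kQ_hi hm α β) hr, kQ_LQ hm α β hr, sub_zero]
  have h1 := hB _ hg
  rw [hG1, hI1, hLg] at h1
  simpa using h1

lemma coerc {m : ℕ} (hm : 1 ≤ m) {Z₁ Z₂ : ℝ → ℂ} (hZ₁ : Continuous Z₁) (hZ₂ : Continuous Z₂)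
    (hs₁ : HasCompactSupport Z₁ ∧ tsupport Z₁ ⊆ Set.Ioi 0)
    (hs₂ : HasCompactSupport Z₂ ∧ tsupport Z₂ ⊆ Set.Ioi 0)
    (hdet : iprod (fun r => (LamQ m r : ℂ)) Z₁ * iprod (fun r => Complex.I * (Q m r : ℂ)) Z₂
        - iprod (fun r => Complex.I * (Q m r : ℂ)) Z₁ * iprod (fun r => (LamQ m r : ℂ)) Z₂ ≠ 0) :
    ∃ K : ℝ, 0 ≤ K ∧ ∀ f, Good m f → iprod f Z₁ = 0 → iprod f Z₂ = 0 →
      ∫ s in Ioi 0, ‖f s‖ ^ 2 / s ≤ K * ∫ s in Ioi 0, ‖LQ m f s‖ ^ 2 * s := by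
  obtain ⟨K, hK, hB⟩ := mainB hm
  obtain ⟨L1, hL1, hb1⟩ := pair_bd hZ₁ hs₁
  obtain ⟨L2, hL2, hb2⟩ := pair_bd hZ₂ hs₂
  have K2n : 0 ≤ ∫ s in Ioi 0, Q m s ^ 2 / s := setIntegral_nonneg measurableSet_Ioi fun s hs => by
    have : 0 < s := hs
    positivity
  have hd : ∃ T1 T2 : ℝ, 0 ≤ T1 ∧ 0 ≤ T2 ∧ ∀ x y α β N : ℝ,
      0 = x + α * iprod (fun r => (LamQ m r : ℂ)) Z₁ + β * iprod (fun r => Complex.I * (Q m r : ℂ)) Z₁ →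
      0 = y + α * iprod (fun r => (LamQ m r : ℂ)) Z₂ + β * iprod (fun r => Complex.I * (Q m r : ℂ)) Z₂ →
      x ^ 2 ≤ L1 * N → y ^ 2 ≤ L2 * N → α ^ 2 ≤ T1 * N ∧ β ^ 2 ≤ T2 * N := by
    refine ⟨_, _, ?_, ?_, fun x y α β N s1 s2 p1 p2 =>
      ⟨cramer hdet s1 s2 p1 p2, cramer2 hdet s1 s2 p1 p2⟩⟩
    · positivity
    · positivity
  obtain ⟨T1, T2, T1n, T2n, hT⟩ := hd
  obtain ⟨K2, hK2⟩ : ∃ K2, K2 = ∫ s in Ioi 0, Q m s ^ 2 / s := ⟨_, rfl⟩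
  rw [← hK2] at K2n
  refine ⟨(2 + 2 * ((T1 * (m + 1) ^ 2 + T2) * K2)) * K, by positivity, ?_⟩
  intro f hf hf1 hf2
  obtain ⟨α, β, hg, h1⟩ := shift hm hK hB hf
  have s1 := pair_split hm (f_cont hf.cd) hZ₁ hs₁ α β
  have s2 := pair_split hm (f_cont hf.cd) hZ₂ hs₂ α β
  rw [hf1] at s1
  rw [hf2] at s2
  have p1 := hb1 _ (f_cont hg.cd) hg.hi
  have p2 := hb2 _ (f_cont hg.cd) hg.hi
  have hsum := N_split hf.hi hg.hi (kQ_hi hm α β)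
  have hk := kQ_int_le hm α β
  rw [← hK2] at hk
  have Nn : 0 ≤ ∫ r in Ioi 0, ‖f r - kQ m α β r‖ ^ 2 / r :=
    setIntegral_nonneg measurableSet_Ioi fun s hs => by
      have : 0 < s := hs
      positivity
  generalize (∫ r in Ioi 0, ‖f r - kQ m α β r‖ ^ 2 / r) = N at *
  obtain ⟨a1, a2⟩ := hT _ _ _ _ _ s1 s2 p1 p2
  have hk2 : (α ^ 2 * (m + 1) ^ 2 + β ^ 2) * K2 ≤ (T1 * N * (m + 1) ^ 2 + T2 * N) * K2 := by
    gcongr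
  calc _ ≤ (2 + 2 * ((T1 * (m + 1) ^ 2 + T2) * K2)) * N := by
        linarith
    _ ≤ (2 + 2 * ((T1 * (m + 1) ^ 2 + T2) * K2)) * (K * ∫ s in Ioi 0, ‖LQ m f s‖ ^ 2 * s) := by
        apply mul_le_mul_of_nonneg_left _ (by positivity)
        linarith
    _ = _ := by ring

lemma int3 {a b c q : ℝ → ℝ} {x y z : ℝ} (ha : IntegrableOn a (Ioi 0)) (hb : IntegrableOn b (Ioi 0))
    (hc : IntegrableOn c (Ioi 0)) (hq : IntegrableOn q (Ioi 0))
    (h : ∀ r ∈ Ioi (0:ℝ), a r ≤ x * b r + y * c r + z * q r) :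
    ∫ r in Ioi 0, a r ≤ x * (∫ r in Ioi 0, b r) + y * (∫ r in Ioi 0, c r) + z * ∫ r in Ioi 0, q r := by
  have i1 : IntegrableOn (fun r => x * b r + y * c r) (Ioi 0) :=
    Integrable.add (hb.const_mul x) (hc.const_mul y)
  have i2 : IntegrableOn (fun r => x * b r + y * c r + z * q r) (Ioi 0) :=
    Integrable.add i1 (hq.const_mul z)
  have := setIntegral_mono_on ha i2 measurableSet_Ioi h
  rwa [integral_add i1 (hq.const_mul z), integral_add (hb.const_mul x) (hc.const_mul y),
    integral_const_mul, integral_const_mul, integral_const_mul] at this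

end Aux

/-- coercivity of the linearized Bogomol'nyi operator:
`‖L_Q f‖_{L²} ∼ ‖f‖_{Ḣ¹_m}` under the orthogonality conditions. -/
theorem stmt15 (m : ℕ) (hm : 1 ≤ m)
    (Z₁ Z₂ : ℝ → ℂ)
    (hZ₁ : ContDiff ℝ (⊤ : ℕ∞) Z₁) (hZ₂ : ContDiff ℝ (⊤ : ℕ∞) Z₂)
    (hsupp₁ : HasCompactSupport Z₁ ∧ tsupport Z₁ ⊆ Set.Ioi 0)
    (hsupp₂ : HasCompactSupport Z₂ ∧ tsupport Z₂ ⊆ Set.Ioi 0)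
    (hdet : iprod (fun r => (LamQ m r : ℂ)) Z₁ * iprod (fun r => Complex.I * (Q m r : ℂ)) Z₂
        - iprod (fun r => Complex.I * (Q m r : ℂ)) Z₁ * iprod (fun r => (LamQ m r : ℂ)) Z₂ ≠ 0) :
    ∃ c C : ℝ, 0 < c ∧ c ≤ C ∧
      ∀ f : ℝ → ℂ, ContDiffOn ℝ 1 f (Set.Ioi 0) →
        IntegrableOn (fun r => (‖deriv f r‖ ^ 2 + (m : ℝ) ^ 2 * ‖f r‖ ^ 2 / r ^ 2) * r)
          (Set.Ioi (0:ℝ)) →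
        iprod f Z₁ = 0 → iprod f Z₂ = 0 →
        c * Real.sqrt (H1msq m f) ≤ Real.sqrt (L2sq (LQ m f)) ∧
        Real.sqrt (L2sq (LQ m f)) ≤ C * Real.sqrt (H1msq m f) := by
  obtain ⟨K, hK, hco⟩ := coerc hm hZ₁.continuous hZ₂.continuous hsupp₁ hsupp₂ hdet
  obtain ⟨K1, hK1⟩ : ∃ x : ℝ, x = ∫ s in Ioi 0, Q m s ^ 2 * s ^ 3 := ⟨_, rfl⟩
  obtain ⟨K2, hK2⟩ : ∃ x : ℝ, x = ∫ s in Ioi 0, Q m s ^ 2 / s := ⟨_, rfl⟩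
  have K1n : 0 ≤ K1 := hK1 ▸ setIntegral_nonneg measurableSet_Ioi fun s hs => by
    have : 0 < s := hs
    positivity
  have K2n : 0 ≤ K2 := hK2 ▸ setIntegral_nonneg measurableSet_Ioi fun s hs => by
    have : 0 < s := hs
    positivity
  have hm1 : (1:ℝ) ≤ m := by exact_mod_cast hm
  obtain ⟨M, hM⟩ : ∃ x : ℝ, x = 3 * ((m:ℝ) + 2) ^ 2 + 3 * (K1 * K2) := ⟨_, rfl⟩
  have Mn : 0 ≤ M := by rw [hM]; positivity
  obtain ⟨V, hV⟩ : ∃ x : ℝ, x = 3 + (M + (m:ℝ) ^ 2) * K + (3 + M) := ⟨_, rfl⟩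
  have hV1 : 1 ≤ V := by
    have : 0 ≤ (M + (m:ℝ) ^ 2) * K := by positivity
    linarith
  have hsV : 1 ≤ √V := Real.one_le_sqrt.2 hV1
  refine ⟨(√V)⁻¹, √V, inv_pos.2 (by linarith), (inv_le_one_of_one_le₀ hsV).trans hsV, ?_⟩
  intro f cd hint h1 h2
  have hi : IntegrableOn (fun r => ‖f r‖ ^ 2 / r) (Ioi 0) := by
    refine Integrable.mono' hint ?_ ?_
    · apply ContinuousOn.aestronglyMeasurable _ measurableSet_Ioi
      exact ((f_cont cd).norm.pow 2).div continuousOn_id (fun x hx => (ne_of_gt hx))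
    · refine (ae_restrict_iff' measurableSet_Ioi).2 (ae_of_all _ fun r hr => ?_)
      have hr : 0 < r := hr
      rw [Real.norm_eq_abs, abs_of_nonneg (by positivity)]
      have e : (‖deriv f r‖ ^ 2 + (m : ℝ) ^ 2 * ‖f r‖ ^ 2 / r ^ 2) * r
          = ‖deriv f r‖ ^ 2 * r + (m : ℝ) ^ 2 * (‖f r‖ ^ 2 / r) := by field_simp
      rw [e]
      have t1 : 0 ≤ ‖deriv f r‖ ^ 2 * r := by positivity
      have t2 : 0 ≤ ‖f r‖ ^ 2 / r := by positivity
      have hm2 : (1:ℝ) ≤ (m:ℝ) ^ 2 := one_le_pow₀ hm1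
      have := mul_le_mul_of_nonneg_right hm2 t2
      linarith
  have hd : IntegrableOn (fun r => ‖deriv f r‖ ^ 2 * r) (Ioi 0) := by
    refine Integrable.mono' hint ?_ ?_
    · apply ContinuousOn.aestronglyMeasurable _ measurableSet_Ioi
      exact ((f'_cont cd).norm.pow 2).mul continuousOn_id
    · refine (ae_restrict_iff' measurableSet_Ioi).2 (ae_of_all _ fun r hr => ?_)
      have hr : 0 < r := hr
      rw [Real.norm_eq_abs, abs_of_nonneg (by positivity)]
      apply mul_le_mul_of_nonneg_right _ hr.le
      have : 0 ≤ (m : ℝ) ^ 2 * ‖f r‖ ^ 2 / r ^ 2 := by positivity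
      linarith
  have hf := Good_of hm cd hi hd
  have hc := hco f hf h1 h2
  have hH1 : H1msq m f = 2 * Real.pi * ((∫ r in Ioi 0, ‖deriv f r‖ ^ 2 * r)
      + (m : ℝ) ^ 2 * ∫ r in Ioi 0, ‖f r‖ ^ 2 / r) := by
    unfold H1msq
    have e : ∫ r in Ioi 0, (‖deriv f r‖ ^ 2 + (m : ℝ) ^ 2 * ‖f r‖ ^ 2 / r ^ 2) * r
        = ∫ r in Ioi 0, (‖deriv f r‖ ^ 2 * r + (m : ℝ) ^ 2 * (‖f r‖ ^ 2 / r)) := by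
      apply setIntegral_congr_fun measurableSet_Ioi
      intro r hr
      have hr : 0 < r := hr
      simp only
      field_simp
    rw [e, integral_add hd (hi.const_mul _), integral_const_mul]
  have hL2 : L2sq (LQ m f) = 2 * Real.pi * ∫ r in Ioi 0, ‖LQ m f r‖ ^ 2 * r := rfl
  have w := fun (r : ℝ) (hr : r ∈ Ioi (0:ℝ)) => two_way hm cd hi hr
  rw [← hK1] at w
  have hq := int_Qdiv m hm
  have Nn : 0 ≤ ∫ r in Ioi 0, ‖f r‖ ^ 2 / r := setIntegral_nonneg measurableSet_Ioi fun s hs => by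
    have : 0 < s := hs
    positivity
  have Dn : 0 ≤ ∫ r in Ioi 0, ‖deriv f r‖ ^ 2 * r := setIntegral_nonneg measurableSet_Ioi fun s hs => by
    have : 0 < s := hs
    positivity
  have Hn : 0 ≤ ∫ r in Ioi 0, ‖LQ m f r‖ ^ 2 * r := setIntegral_nonneg measurableSet_Ioi fun s hs => by
    have : 0 < s := hs
    positivity
  have u1 := int3 hf.hh hd hi hq (fun r hr => (w r hr).1)
  have u2 := int3 hd hf.hh hi hq (fun r hr => (w r hr).2)
  rw [← hK2] at u1 u2
  generalize (∫ r in Ioi 0, ‖f r‖ ^ 2 / r) = N at *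
  generalize (∫ r in Ioi 0, ‖deriv f r‖ ^ 2 * r) = D at *
  generalize (∫ r in Ioi 0, ‖LQ m f r‖ ^ 2 * r) = H at *
  have hm2 : (1:ℝ) ≤ (m:ℝ) ^ 2 := one_le_pow₀ hm1
  have v1 : H ≤ V * (D + (m : ℝ) ^ 2 * N) := by
    have e1 : H ≤ 3 * D + M * N := by rw [hM]; linarith
    have e2 : N ≤ (m : ℝ) ^ 2 * N := le_mul_of_one_le_left Nn hm2
    have e3 : 3 * D + M * N ≤ (3 + M) * (D + (m : ℝ) ^ 2 * N) := by
      linarith [mul_nonneg Mn Dn, mul_le_mul_of_nonneg_left e2 Mn, Nn, e2]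
    have e4 : 3 + M ≤ V := by
      have : 0 ≤ (M + (m:ℝ) ^ 2) * K := by positivity
      linarith
    exact (e1.trans e3).trans (mul_le_mul_of_nonneg_right e4 (by positivity))
  have v2 : D + (m : ℝ) ^ 2 * N ≤ V * H := by
    have e1 : D + (m : ℝ) ^ 2 * N ≤ 3 * H + (M + (m:ℝ) ^ 2) * N := by rw [hM]; linarith
    have e2 : (M + (m:ℝ) ^ 2) * N ≤ (M + (m:ℝ) ^ 2) * (K * H) :=
      mul_le_mul_of_nonneg_left hc (by positivity)
    have e3 : 0 ≤ (3 + M) * H := by positivity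
    rw [hV]
    linarith
  have hπ : 0 ≤ 2 * Real.pi := by positivity
  have g1 := mul_le_mul_of_nonneg_left v2 hπ
  have g2 := mul_le_mul_of_nonneg_left v1 hπ
  have V0 : 0 ≤ V := by linarith
  have sV0 : 0 < √V := by linarith
  rw [hH1, hL2]
  constructor
  · rw [inv_mul_le_iff₀ sV0, ← Real.sqrt_mul V0]
    apply Real.sqrt_le_sqrt
    linarith
  · rw [← Real.sqrt_mul V0]
    apply Real.sqrt_le_sqrt
    linarith
end

section
/- Let m ≥ 1 be an integer. There exists a constant C = C(m) such that for every continuously differentiable ε : (0,∞) → ℂ with ‖ε‖_{L²} < ∞ and ‖ε‖_{Ḣ¹_m} < ∞, one has the Hardy-type estimate ( 2π·∫₀^∞ (A_θ[ε](r)/r)²·Q(r)²·r dr )^{1/2} ≤ C·‖ε‖_{L²}^{1/2}·‖ε‖_{Ḣ¹_m}^{3/2}. -/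
open MeasureTheory Set Filter

theorem aux_Q (m : ℕ) (r : ℝ) (hr : 0 < r) :
    r ^ 2 * Q m r ^ 2 ≤ 16 * ((m:ℝ) + 1) ^ 2 * (1 + r ^ 2)⁻¹ := by
  have h8 : Real.sqrt 8 ^ 2 = 8 := Real.sq_sqrt (by norm_num)
  set x := r ^ (2 * m + 2) with hx
  have hx0 : 0 < x := by positivity
  have hsq : r ^ 2 ≤ 1 + x := by
    rcases le_total r 1 with h | h
    · have : r ^ 2 ≤ 1 := pow_le_one₀ hr.le h
      linarith
    · have : r ^ 2 ≤ x := pow_le_pow_right₀ h (by omega)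
      linarith
  have e : r ^ 2 * Q m r ^ 2 = 8 * ((m:ℝ) + 1) ^ 2 * (x / (1 + x) ^ 2) := by
    unfold Q
    rw [div_pow, mul_pow, mul_pow, h8, ← hx]
    have : x = r ^ 2 * (r ^ m) ^ 2 := by rw [hx]; ring
    rw [mul_div_assoc', mul_div_assoc']
    congr 1
    rw [this]; ring
  have k : x / (1 + x) ^ 2 ≤ 2 * (1 + r ^ 2)⁻¹ := by
    rw [← div_eq_mul_inv, div_le_div_iff₀ (by positivity) (by positivity)]
    nlinarith [mul_le_mul_of_nonneg_left hsq hx0.le]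
  rw [e]
  calc _ ≤ 8 * ((m:ℝ) + 1) ^ 2 * (2 * (1 + r ^ 2)⁻¹) := by gcongr
    _ = _ := by ring

theorem aux_F (F M b r : ℝ) (hr : 0 < r) (hF : 0 ≤ F) (h1 : F ≤ M) (h2 : F ≤ r ^ 2 * b) :
    F ^ 2 ≤ Real.sqrt M * (b * Real.sqrt b) * r ^ 3 := by
  have hb : 0 ≤ b := by
    by_contra h
    push Not at h
    nlinarith [pow_pos hr 2]
  have a1 : Real.sqrt F ≤ Real.sqrt M := Real.sqrt_le_sqrt h1
  have a2 : Real.sqrt F ≤ r * Real.sqrt b := by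
    calc _ ≤ Real.sqrt (r ^ 2 * b) := Real.sqrt_le_sqrt h2
      _ = _ := by rw [Real.sqrt_mul (by positivity), Real.sqrt_sq hr.le]
  calc F ^ 2 = (Real.sqrt F * Real.sqrt F) * F := by rw [Real.mul_self_sqrt hF]; ring
    _ ≤ (Real.sqrt M * (r * Real.sqrt b)) * (r ^ 2 * b) := by gcongr
    _ = _ := by ring

theorem aux_fin (A L H : ℝ) (hA : 0 ≤ A) (hL : 0 ≤ L) (hH : 0 ≤ H) :
    Real.sqrt (A * (Real.sqrt L * (H * Real.sqrt H))) =
      Real.sqrt A * Real.sqrt L ^ ((1 : ℝ) / 2) * Real.sqrt H ^ ((3 : ℝ) / 2) := by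
  rw [Real.sqrt_mul hA, Real.sqrt_mul (Real.sqrt_nonneg _), ← Real.sqrt_eq_rpow, mul_assoc]
  congr 2
  rw [Real.sqrt_mul hH]
  have : (3:ℝ)/2 = 1 + 1/2 := by norm_num
  rw [this, Real.rpow_add_of_nonneg (Real.sqrt_nonneg _) (by norm_num) (by norm_num),
    Real.rpow_one, ← Real.sqrt_eq_rpow]

/-- Hardy-type estimate
`‖(A_θ[ε]/r) Q‖_{L²} ≤ C ‖ε‖_{L²}^{1/2} ‖ε‖_{Ḣ¹_m}^{3/2}`. -/
theorem stmt17 (m : ℕ) (hm : 1 ≤ m) :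
    ∃ C : ℝ,
    ∀ ε : ℝ → ℂ, ContDiffOn ℝ 1 ε (Set.Ioi 0) →
      IntegrableOn (fun r => ‖ε r‖ ^ 2 * r) (Set.Ioi (0:ℝ)) →
      IntegrableOn (fun r => (‖deriv ε r‖ ^ 2 + (m : ℝ) ^ 2 * ‖ε r‖ ^ 2 / r ^ 2) * r)
        (Set.Ioi (0:ℝ)) →
      Real.sqrt (2 * Real.pi * ∫ r in Set.Ioi (0:ℝ),
          (Atheta ε r / r) ^ 2 * Q m r ^ 2 * r)
        ≤ C * Real.sqrt (L2sq ε) ^ ((1 : ℝ) / 2) * Real.sqrt (H1msq m ε) ^ ((3 : ℝ) / 2) := by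
  set J : ℝ := ∫ r in Set.Ioi (0:ℝ), (1 + r ^ 2)⁻¹ with hJ
  have hJ0 : 0 ≤ J := integral_nonneg fun r => by positivity
  refine ⟨Real.sqrt (2 * Real.pi * (4 * ((m:ℝ) + 1) ^ 2 * J)), fun ε hε h1 h2 => ?_⟩
  have hpi : 1 ≤ 2 * Real.pi := by linarith [Real.pi_gt_three]
  have hc : ContinuousOn ε (Set.Ioi 0) := hε.continuousOn
  have hm1 : (1:ℝ) ≤ (m:ℝ) ^ 2 := one_le_pow₀ (by exact_mod_cast hm)
  have pt : ∀ r ∈ Set.Ioi (0:ℝ), ‖ε r‖ ^ 2 / r ≤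
      (‖deriv ε r‖ ^ 2 + (m : ℝ) ^ 2 * ‖ε r‖ ^ 2 / r ^ 2) * r := by
    intro r hr
    have hr : 0 < r := hr
    have e : (‖deriv ε r‖ ^ 2 + (m : ℝ) ^ 2 * ‖ε r‖ ^ 2 / r ^ 2) * r
      = ‖deriv ε r‖ ^ 2 * r + (m : ℝ) ^ 2 * (‖ε r‖ ^ 2 / r) := by
      field_simp
    rw [e]
    have : 0 ≤ ‖ε r‖ ^ 2 / r := by positivity
    have : 0 ≤ ‖deriv ε r‖ ^ 2 * r := by positivity
    nlinarith
  have h3 : IntegrableOn (fun r => ‖ε r‖ ^ 2 / r) (Set.Ioi (0:ℝ)) := by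
    refine Integrable.mono' h2 ?_ ?_
    · refine ContinuousOn.aestronglyMeasurable ?_ measurableSet_Ioi
      exact (hc.norm.pow 2).div continuousOn_id fun x hx => ne_of_gt hx
    · filter_upwards [ae_restrict_mem measurableSet_Ioi] with r hr
      have hr' : 0 < r := hr
      rw [Real.norm_of_nonneg (by positivity)]
      exact pt r hr
  set M := ∫ r in Set.Ioi (0:ℝ), ‖ε r‖ ^ 2 * r with hM
  set b := ∫ r in Set.Ioi (0:ℝ), ‖ε r‖ ^ 2 / r with hb
  have hM0 : 0 ≤ M := setIntegral_nonneg measurableSet_Ioi fun r hr => by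
    have hr' : 0 < r := hr
    positivity
  have hb0 : 0 ≤ b := setIntegral_nonneg measurableSet_Ioi fun r hr => by
    have hr' : 0 < r := hr
    positivity
  have hML : M ≤ L2sq ε := by
    unfold L2sq
    rw [← hM]; nlinarith
  have hbH : b ≤ H1msq m ε := by
    have := setIntegral_mono_on h3 h2 measurableSet_Ioi pt
    unfold H1msq
    rw [← hb] at this
    nlinarith
  have main : ∫ r in Set.Ioi (0:ℝ), (Atheta ε r / r) ^ 2 * Q m r ^ 2 * r ≤
      ∫ r in Set.Ioi (0:ℝ), (4 * ((m:ℝ) + 1) ^ 2 * (Real.sqrt M * (b * Real.sqrt b))) *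
        (1 + r ^ 2)⁻¹ := by
    refine integral_mono_of_nonneg ?_ ?_ ?_
    · filter_upwards [ae_restrict_mem measurableSet_Ioi] with r hr
      have hr' : 0 < r := hr
      simp only [Pi.zero_apply]
      positivity
    · exact (integrable_inv_one_add_sq.const_mul _).integrableOn
    · filter_upwards [ae_restrict_mem measurableSet_Ioi] with r hr
      have hr' : 0 < r := hr
      have sub : Set.Ioc 0 r ⊆ Set.Ioi (0:ℝ) := fun x hx => hx.1
      set F := ∫ s in Set.Ioc 0 r, ‖ε s‖ ^ 2 * s with hF
      have hA : Atheta ε r = -(1/2) * F := by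
        unfold Atheta
        rw [intervalIntegral.integral_of_le hr'.le]
      have F0 : 0 ≤ F := setIntegral_nonneg measurableSet_Ioc fun s hs => by
        have := hs.1
        positivity
      have FM : F ≤ M := by
        refine setIntegral_mono_set h1 ?_ (Eventually.of_forall sub)
        filter_upwards [ae_restrict_mem measurableSet_Ioi] with s hs
        have hs' : 0 < s := hs
        simp only [Pi.zero_apply]
        positivity
      have Fb : F ≤ r ^ 2 * b := by
        calc F ≤ ∫ s in Set.Ioc 0 r, r ^ 2 * (‖ε s‖ ^ 2 / s) := by
              refine setIntegral_mono_on (h1.mono_set sub)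
                ((h3.mono_set sub).const_mul _) measurableSet_Ioc fun s hs => ?_
              have hs0 := hs.1
              have hs2 : s ^ 2 ≤ r ^ 2 := pow_le_pow_left₀ hs0.le hs.2 2
              calc ‖ε s‖ ^ 2 * s = s ^ 2 * (‖ε s‖ ^ 2 / s) := by field_simp
                _ ≤ _ := by gcongr
          _ = r ^ 2 * ∫ s in Set.Ioc 0 r, (‖ε s‖ ^ 2 / s) := integral_const_mul _ _
          _ ≤ r ^ 2 * b := by
              gcongr
              refine setIntegral_mono_set h3 ?_ (Eventually.of_forall sub)
              filter_upwards [ae_restrict_mem measurableSet_Ioi] with s hs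
              have hs' : 0 < s := hs
              simp only [Pi.zero_apply]
              positivity
      have k1 := aux_F F M b r hr' F0 FM Fb
      have k2 := aux_Q m r hr'
      have e : (Atheta ε r / r) ^ 2 * Q m r ^ 2 * r = F ^ 2 * (Q m r ^ 2 / (4 * r)) := by
        rw [hA]; field_simp; ring
      show (Atheta ε r / r) ^ 2 * Q m r ^ 2 * r ≤ _
      rw [e]
      calc _ ≤ (Real.sqrt M * (b * Real.sqrt b) * r ^ 3) * (Q m r ^ 2 / (4 * r)) := by gcongr
        _ = (Real.sqrt M * (b * Real.sqrt b) / 4) * (r ^ 2 * Q m r ^ 2) := by field_simp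
        _ ≤ (Real.sqrt M * (b * Real.sqrt b) / 4) *
            (16 * ((m:ℝ) + 1) ^ 2 * (1 + r ^ 2)⁻¹) := by gcongr
        _ = _ := by ring
  rw [integral_const_mul, ← hJ] at main
  rw [← aux_fin _ _ _ (by positivity) (hM0.trans hML) (hb0.trans hbH)]
  refine Real.sqrt_le_sqrt ?_
  have k : Real.sqrt M * (b * Real.sqrt b) ≤
      Real.sqrt (L2sq ε) * (H1msq m ε * Real.sqrt (H1msq m ε)) := by
    have := hb0.trans hbH
    gcongr
  calc _ ≤ 2 * Real.pi * (4 * ((m:ℝ) + 1) ^ 2 * (Real.sqrt M * (b * Real.sqrt b)) * J) := by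
        gcongr
    _ = (2 * Real.pi * (4 * ((m:ℝ) + 1) ^ 2 * J)) * (Real.sqrt M * (b * Real.sqrt b)) := by ring
    _ ≤ _ := by gcongr
end
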